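/- Let d ≥ 3 and k ≥ 2, and let G = (V,E) be a graph with no isolated vertices whose edge set E is a k-fold R_d-circuit, such that G is not R_d-rigid and |V| ≤ d+5. Then k = 2 and G is the union of two complete graphs G_1 and G_2, each on d+2 vertices, with |V(G_1) ∩ V(G_2)| = d−1 (the graph denoted B̄_{d,d−1}). -/

import Mathlib

open scoped BigOperators

/-- The row of the `d`-dimensional rigidity matrix of a realisation `p : V → ℝ^d`
indexed by the (unordered) edge `e`. -/
noncomputable def rigRow (d : ℕ) {V : Type*} [DecidableEq V]
    (p : V → Fin d → ℝ) (e : Sym2 V) : V × Fin d → ℝ :=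
  Sym2.lift
    ⟨fun u v wi =>
        (((if wi.1 = u then (1 : ℝ) else 0) - (if wi.1 = v then (1 : ℝ) else 0)) *
          (p u wi.2 - p v wi.2)),
      fun u v => by funext wi; ring⟩ e

/-- A realisation is generic if the coordinates of the points form an algebraically
independent set over `ℚ`. -/
def Generic (d : ℕ) {V : Type*} (p : V → Fin d → ℝ) : Prop :=
  AlgebraicIndependent ℚ fun vi : V × Fin d => p vi.1 vi.2

/-- `rrk d p F` : the rank of the set of rows of the rigidity matrix of `(K_V, p)`
indexed by the edges in `F`.  For generic `p` this is the rank function `r_d` of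
the generic `d`-dimensional rigidity matroid. -/
noncomputable def rrk (d : ℕ) {V : Type*} [Fintype V] [DecidableEq V]
    (p : V → Fin d → ℝ) (F : Set (Sym2 V)) : ℕ :=
  Module.finrank ℝ (Submodule.span ℝ (rigRow d p '' F))

/-- `D` is a `k`-fold circuit (with respect to the realisation `p`) :
`r (D \ {f}) = r D` for every `f ∈ D`, and `r D = |D| - k`. -/
def IsKFoldCircuit (d : ℕ) {V : Type*} [Fintype V] [DecidableEq V]
    (p : V → Fin d → ℝ) (D : Finset (Sym2 V)) (k : ℕ) : Prop :=
  (∀ f ∈ D, rrk d p (↑D \ {f}) = rrk d p ↑D) ∧ rrk d p ↑D + k = D.card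

/-- An `R_d`-circuit: `r C = |C| - 1` and `r (C \ {f}) = r C` for all `f ∈ C`. -/
def IsCircuit (d : ℕ) {V : Type*} [Fintype V] [DecidableEq V]
    (p : V → Fin d → ℝ) (C : Finset (Sym2 V)) : Prop :=
  IsKFoldCircuit d p C 1

/-- `A` is a part of the principal partition of the `k`-fold circuit `D`:
the parts are the sets `D \ B` where `B` runs over the `(k-1)`-fold circuits
contained in `D`. -/
def IsPrincipalPart (d : ℕ) {V : Type*} [Fintype V] [DecidableEq V]
    (p : V → Fin d → ℝ) (D : Finset (Sym2 V)) (k : ℕ) (A : Finset (Sym2 V)) : Prop :=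
  ∃ B ⊆ D, IsKFoldCircuit d p B (k - 1) ∧ A = D \ B

/-- Closure in the rigidity matroid: all edges of `K_V` whose addition to `F`
does not increase the rank. -/
def rcl (d : ℕ) {V : Type*} [Fintype V] [DecidableEq V]
    (p : V → Fin d → ℝ) (F : Set (Sym2 V)) : Set (Sym2 V) :=
  {e | ¬ e.IsDiag ∧ rrk d p (insert e F) = rrk d p F}

/-- A `k`-fold circuit `D` with principal partition `A_1, …, A_ℓ` is balanced if
`r_d (⋂ i, cl_d (D \ A_i)) = ℓ - k`. -/
def IsBalanced (d : ℕ) {V : Type*} [Fintype V] [DecidableEq V]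
    (p : V → Fin d → ℝ) (D : Finset (Sym2 V)) (k : ℕ) : Prop :=
  rrk d p (⋂ A ∈ {A | IsPrincipalPart d p D k A}, rcl d p ↑(D \ A)) + k =
    Set.ncard {A | IsPrincipalPart d p D k A}

/-- A vertex is monochromatic if all edges of `D` incident with it lie in a single
part of the principal partition (and technicolour otherwise). -/
def Monochromatic (d : ℕ) {V : Type*} [Fintype V] [DecidableEq V]
    (p : V → Fin d → ℝ) (D : Finset (Sym2 V)) (k : ℕ) (w : V) : Prop :=
  ∃ A, IsPrincipalPart d p D k A ∧ ∀ e ∈ D, w ∈ e → e ∈ A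

/-- The graph `(W, E)` is `R_d`-rigid: it is a complete graph on at most `d+1`
vertices, or `r_d(E) = d|W| - (d+1 choose 2)`. -/
def IsRigidOn (d : ℕ) {V : Type*} [Fintype V] [DecidableEq V]
    (p : V → Fin d → ℝ) (W : Finset V) (E : Finset (Sym2 V)) : Prop :=
  (W.card ≤ d + 1 ∧ ∀ u ∈ W, ∀ w ∈ W, u ≠ w → s(u, w) ∈ E) ∨
    (rrk d p ↑E : ℤ) + ((d + 1).choose 2 : ℤ) = (d : ℤ) * (W.card : ℤ)

/-- The edge set of the cone of (the graph with edge set) `D` over a new vertex,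
realised as `none : Option V`. -/
def coneEdges {V : Type*} [Fintype V] [DecidableEq V] (D : Finset (Sym2 V)) :
    Finset (Sym2 (Option V)) :=
  D.image (Sym2.map Option.some) ∪
    Finset.univ.image fun u : V => s((Option.some u : Option V), (none : Option V))

/-- The degree of the vertex `w` in the edge set `D`. -/
def degIn {V : Type*} [Fintype V] [DecidableEq V] (D : Finset (Sym2 V)) (w : V) : ℕ :=
  (D.filter fun e => w ∈ e).card

/-- The set of vertices incident with an edge of `F`. -/
def esupp {V : Type*} [Fintype V] [DecidableEq V] (F : Finset (Sym2 V)) : Finset V :=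
  Finset.univ.filter fun w => ∃ e ∈ F, w ∈ e

/-- The edge set of the complete graph on the vertex set `W`. -/
def cliqueOn {V : Type*} [Fintype V] [DecidableEq V] (W : Finset V) : Finset (Sym2 V) :=
  ((W ×ˢ W).filter fun t => t.1 ≠ t.2).image fun t => s(t.1, t.2)

set_option linter.unusedSectionVars false

/-! ### Generic conditions -/

/-- A condition on real points holding off the zero set of a nonzero rational polynomial. -/
def GenP {σ : Type*} (Q : (σ → ℝ) → Prop) : Prop :=
  ∃ P : MvPolynomial σ ℚ, P ≠ 0 ∧ ∀ x : σ → ℝ, MvPolynomial.aeval x P ≠ 0 → Q x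

lemma GenP.and {σ : Type*} {Q R : (σ → ℝ) → Prop} (hQ : GenP Q) (hR : GenP R) :
    GenP fun x => Q x ∧ R x := by
  obtain ⟨P, hP, hPQ⟩ := hQ
  obtain ⟨P', hP', hPR⟩ := hR
  refine ⟨P * P', mul_ne_zero hP hP', fun x hx => ?_⟩
  rw [map_mul] at hx
  exact ⟨hPQ x (left_ne_zero_of_mul hx), hPR x (right_ne_zero_of_mul hx)⟩

lemma GenP.all {σ ι : Type*} (s : Finset ι) {Q : ι → (σ → ℝ) → Prop}
    (hQ : ∀ i ∈ s, GenP (Q i)) : GenP fun x => ∀ i ∈ s, Q i x := by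
  classical
  induction s using Finset.induction_on with
  | empty => exact ⟨1, one_ne_zero, by simp⟩
  | insert a s ha ih =>
    obtain ⟨P, h0, h⟩ := (hQ a (by simp)).and (ih fun i hi => hQ i (by simp [hi]))
    refine ⟨P, h0, fun x hx i hi => ?_⟩
    rcases Finset.mem_insert.1 hi with rfl | hi
    · exact (h x hx).1
    · exact (h x hx).2 i hi

lemma GenP.exists {σ : Type*} {Q : (σ → ℝ) → Prop} (hQ : GenP Q) : ∃ x, Q x := by
  obtain ⟨P, h0, h⟩ := hQ
  by_contra hcon
  push Not at hcon
  apply h0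
  apply MvPolynomial.funext
  intro x
  by_contra hx
  refine hcon (algebraMap ℚ ℝ ∘ x) (h _ ?_)
  rw [MvPolynomial.aeval_algebraMap_apply ℝ x P]
  simpa [MvPolynomial.aeval_eq_eval] using hx

lemma GenP.of_algInd {σ : Type*} {Q : (σ → ℝ) → Prop} (hQ : GenP Q) (x : σ → ℝ)
    (hx : AlgebraicIndependent ℚ x) : Q x := by
  obtain ⟨P, h0, h⟩ := hQ
  refine h x fun h1 => h0 ?_
  exact hx (by simpa using h1)

lemma genP_li {σ ι κ : Type*} [Finite ι] [Finite κ] (M : ι → κ → MvPolynomial σ ℚ)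
    (x0 : σ → ℝ)
    (h : LinearIndependent ℝ (fun i k => MvPolynomial.aeval x0 (M i k) : ι → κ → ℝ)) :
    GenP fun x : σ → ℝ =>
      LinearIndependent ℝ (fun i k => MvPolynomial.aeval x (M i k) : ι → κ → ℝ) := by
  classical
  have := Fintype.ofFinite ι
  have := Fintype.ofFinite κ
  let A : Matrix ι κ (MvPolynomial σ ℚ) := Matrix.of M
  have key : ∀ x : σ → ℝ, MvPolynomial.aeval x (A * A.transpose).det =
      ((Matrix.of fun i k => MvPolynomial.aeval x (M i k) : Matrix ι κ ℝ) *
        (Matrix.of fun i k => MvPolynomial.aeval x (M i k) : Matrix ι κ ℝ).transpose).det := by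
    intro x
    rw [AlgHom.map_det]
    congr 1
    ext i j
    simp [A, Matrix.mul_apply]
  refine ⟨(A * A.transpose).det, ?_, ?_⟩
  · intro h0
    have h1 := key x0
    rw [h0, map_zero] at h1
    set B : Matrix ι κ ℝ := Matrix.of fun i k => MvPolynomial.aeval x0 (M i k) with hB
    have hr : (B * B.transpose).rank = Fintype.card ι := by
      rw [Matrix.rank_self_mul_transpose]
      exact LinearIndependent.rank_matrix h
    have hu : LinearIndependent ℝ (B * B.transpose).row := by
      rw [linearIndependent_iff_card_eq_finrank_span, Set.finrank, ← Matrix.rank_eq_finrank_span_row, hr]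
    rw [Matrix.linearIndependent_rows_iff_isUnit, Matrix.isUnit_iff_isUnit_det, ← h1] at hu
    simp at hu
  · intro x hx
    rw [key] at hx
    set B : Matrix ι κ ℝ := Matrix.of fun i k => MvPolynomial.aeval x (M i k) with hB
    rw [Fintype.linearIndependent_iff]
    intro g hg
    have h1 : Matrix.vecMul g B = 0 := by
      ext k
      have := congrFun hg k
      simpa [Matrix.vecMul, dotProduct, Finset.sum_apply, hB] using this
    have h2 : Matrix.vecMul g (B * B.transpose) = 0 := by
      rw [← Matrix.vecMul_vecMul, h1, Matrix.zero_vecMul]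
    have h3 := Matrix.eq_zero_of_vecMul_eq_zero hx h2
    exact fun i => congrFun h3 i


/-! ### The symmetric-product matroid -/

/-- The symmetric product `b_u b_v` of an edge `uv`. -/
def sp {V : Type*} {m : ℕ} (b : V → Fin m → ℝ) (e : Sym2 V) : Fin m × Fin m → ℝ :=
  Sym2.lift
    ⟨fun u v ij => b u ij.1 * b v ij.2 + b u ij.2 * b v ij.1,
      fun u v => by funext ij; ring⟩ e

@[simp] lemma sp_mk {V : Type*} {m : ℕ} (b : V → Fin m → ℝ) (u v : V) (ij : Fin m × Fin m) :
    sp b s(u, v) ij = b u ij.1 * b v ij.2 + b u ij.2 * b v ij.1 := rfl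

/-- `H` is independent in the symmetric-product matroid of dimension `m`. -/
def IndS {V : Type*} (m : ℕ) (H : Finset (Sym2 V)) : Prop :=
  ∃ b : V → Fin m → ℝ, LinearIndepOn ℝ (sp b) (H : Set (Sym2 V))

lemma IndS.gen {V : Type*} {m : ℕ} {H : Finset (Sym2 V)}
    (h : IndS m H) : GenP fun x : V × Fin m → ℝ =>
      LinearIndepOn ℝ (sp fun v i => x (v, i)) (H : Set (Sym2 V)) := by
  obtain ⟨b, hb⟩ := h
  let X : V → Fin m → MvPolynomial (V × Fin m) ℚ := fun v i => MvPolynomial.X (v, i)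
  let M : ↥(H : Set (Sym2 V)) → (Fin m × Fin m) → MvPolynomial (V × Fin m) ℚ := fun e =>
    Sym2.lift ⟨fun u v ij => X u ij.1 * X v ij.2 + X u ij.2 * X v ij.1,
      fun u v => by funext ij; ring⟩ e.1
  have key : ∀ x : V × Fin m → ℝ,
      (fun (e : (H : Set (Sym2 V))) => sp (fun v i => x (v, i)) e.1) =
        fun e ij => MvPolynomial.aeval x (M e ij) := by
    intro x
    funext ⟨e, he⟩ ij
    induction e using Sym2.ind with
    | _ u v => simp [M, X]
  have h0 : LinearIndependent ℝ (fun (e : (H : Set (Sym2 V))) ij =>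
      (MvPolynomial.aeval (fun vi : V × Fin m => b vi.1 vi.2) (M e ij) : ℝ)) := by
    rw [← key]
    exact hb
  obtain ⟨P, hP, hPx⟩ := genP_li M _ h0
  refine ⟨P, hP, fun x hx => ?_⟩
  have := hPx x hx
  beta_reduce at this
  rw [← key] at this
  exact this

lemma genP_points {V : Type*} {m : ℕ} (N : Finset V) (hN : N.card ≤ m) :
    GenP fun x : V × Fin m → ℝ =>
      LinearIndepOn ℝ (fun v i => x (v, i) : V → Fin m → ℝ) (N : Set V) := by
  classical
  let M : ↥(N : Set V) → Fin m → MvPolynomial (V × Fin m) ℚ := fun v i => MvPolynomial.X (v.1, i)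
  obtain ⟨f⟩ : Nonempty ((N : Set V) ↪ Fin m) :=
    Function.Embedding.nonempty_of_card_le (by simpa using hN)
  let x0 : V × Fin m → ℝ := fun vi => if h : vi.1 ∈ N then
    (if f ⟨vi.1, h⟩ = vi.2 then 1 else 0) else 0
  have h0 : LinearIndependent ℝ (fun (v : (N : Set V)) i =>
      (MvPolynomial.aeval x0 (M v i) : ℝ)) := by
    have h1 := (Pi.basisFun ℝ (Fin m)).linearIndependent.comp f f.injective
    convert h1 using 1
    funext v i
    have hv : v.1 ∈ N := v.2
    simp [M, x0, hv, Pi.single_apply, eq_comm]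
  obtain ⟨P, hP, hPx⟩ := genP_li M _ h0
  refine ⟨P, hP, fun x hx => ?_⟩
  have := hPx x hx
  simpa [M, LinearIndepOn] using this

/-- The extension step. -/
lemma IndS.ext {V : Type*} [Fintype V] [DecidableEq V] {m : ℕ} (H : Finset (Sym2 V))
    (U T : Finset V) (hUT : U ⊆ T)
    (h1 : ∀ e ∈ H, ∀ e' ∈ H, (∀ x ∈ e, x ∈ T) → (∀ x ∈ e', x ∈ T) → e = e')
    (h2 : ∀ u ∈ U, ∀ u' ∈ U, ∀ n, n ∉ T → s(u, n) ∈ H → s(u', n) ∈ H → u = u')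
    (N : Finset V) (hN : N.card ≤ m)
    (h3 : ∀ u ∈ U, ∀ n, n ∉ T → s(u, n) ∈ H → n ∈ N)
    (H' : Finset (Sym2 V)) (hH' : IndS m H')
    (h4 : ∀ e ∈ H, (∀ x ∈ e, x ∉ U) → (∃ x ∈ e, x ∉ T) → e ∈ H') :
    IndS (m + 1) H := by
  classical
  obtain ⟨x, hx1, hx2⟩ := (hH'.gen.and (genP_points (m := m) N hN)).exists
  set b' : V → Fin m → ℝ := fun v i => x (v, i) with hb'
  let b : V → Fin (m + 1) → ℝ := fun v =>
    Fin.cons (if v ∈ T then 1 else 0) (if v ∈ U then 0 else b' v)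
  refine ⟨b, ?_⟩
  rw [linearIndepOn_finset_iff]
  intro g hg
  have hc : ∀ i j, ∑ e ∈ H, g e * sp b e (i, j) = 0 := by
    intro i j
    have := congrFun hg (i, j)
    simpa [Finset.sum_apply] using this
  -- edges inside `T`
  have hT : ∀ e ∈ H, (∀ x ∈ e, x ∈ T) → g e = 0 := by
    intro e he heT
    have h := hc 0 0
    rw [Finset.sum_eq_single_of_mem e he] at h
    · revert h heT
      induction e using Sym2.ind with
      | _ u v =>
        intro heT h
        have hu : u ∈ T := heT u (by simp)
        have hv : v ∈ T := heT v (by simp)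
        simpa [b, hu, hv] using h
    · intro e' he' hne
      have : ¬ ∀ x ∈ e', x ∈ T := fun h => hne (h1 _ he' _ he h heT)
      revert this
      induction e' using Sym2.ind with
      | _ u v =>
        intro h
        by_cases hu : u ∈ T
        · by_cases hv : v ∈ T
          · exact absurd (by simp [hu, hv]) h
          · simp [b, hv]
        · simp [b, hu]
  -- edges avoiding `U`
  have hU : ∀ e ∈ H, (∀ x ∈ e, x ∉ U) → g e = 0 := by
    set H1 := H.filter fun e => (∀ x ∈ e, x ∉ U) ∧ ∃ x ∈ e, x ∉ T with hH1
    have hsub : (H1 : Set (Sym2 V)) ⊆ H' := by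
      intro e he
      have he' : e ∈ H1 := he
      rw [hH1, Finset.mem_filter] at he'
      exact h4 e he'.1 he'.2.1 he'.2.2
    have hli := hx1.mono hsub
    rw [linearIndepOn_finset_iff] at hli
    have hz : ∑ e ∈ H1, g e • sp b' e = 0 := by
      funext ⟨i, j⟩
      have h := hc i.succ j.succ
      rw [Finset.sum_apply, Pi.zero_apply, ← h]
      rw [hH1, Finset.sum_filter]
      refine Finset.sum_congr rfl fun e he => ?_
      split_ifs with hcond
      · have hc1 := hcond.1
        revert hc1
        clear hcond
        induction e using Sym2.ind with
        | _ u v =>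
          intro hc1
          have hu : u ∉ U := hc1 u (by simp)
          have hv : v ∉ U := hc1 v (by simp)
          simp [b, hu, hv]
      · by_cases hc1 : ∀ x ∈ e, x ∉ U
        · have : ∀ x ∈ e, x ∈ T := by
            intro x hx
            by_contra hxT
            exact hcond ⟨hc1, x, hx, hxT⟩
          rw [hT e he this]
          simp
        · revert hc1
          clear hcond
          induction e using Sym2.ind with
          | _ u v =>
            intro hc1
            by_cases hu : u ∈ U
            · simp [b, hu]
            · by_cases hv : v ∈ U
              · simp [b, hv]
              · exact absurd (by simp [hu, hv]) hc1
    intro e he heU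
    by_cases heT : ∀ x ∈ e, x ∈ T
    · exact hT e he heT
    · push Not at heT
      exact hli g hz e (by rw [hH1, Finset.mem_filter]; exact ⟨he, heU, heT⟩)
  -- the remaining edges
  set H2 := H.filter fun e => (∃ x ∈ e, x ∈ U) ∧ ∃ x ∈ e, x ∉ T with hH2
  have hend : ∀ e : Sym2 V, ∃ n, e ∈ H2 → ∃ u ∈ U, n ∉ T ∧ e = s(u, n) := by
    intro e
    by_cases he : e ∈ H2
    · rw [hH2, Finset.mem_filter] at he
      obtain ⟨he, ⟨u, hu, huU⟩, ⟨n, hn, hnT⟩⟩ := he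
      have hne : u ≠ n := fun h => hnT (h ▸ hUT huU)
      exact ⟨n, fun _ => ⟨u, huU, hnT, ((Sym2.mem_and_mem_iff hne).1 ⟨hu, hn⟩)⟩⟩
    · induction e using Sym2.ind with
      | _ u v => exact ⟨u, fun h => absurd h he⟩
  choose nn hnn using hend
  have hH2H : ∀ e ∈ H2, e ∈ H := fun e he => (Finset.mem_filter.1 he).1
  have hinj : Set.InjOn nn (H2 : Set (Sym2 V)) := by
    intro e he e' he' hee
    obtain ⟨u, hu, hn, he1⟩ := hnn e he
    obtain ⟨u', hu', hn', he1'⟩ := hnn e' he'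
    have ha := hH2H e he
    have ha' := hH2H e' he'
    rw [he1] at ha
    rw [he1', ← hee] at ha'
    rw [he1, he1', ← hee, h2 u hu u' hu' _ hn ha ha']
  have hli2 : LinearIndepOn ℝ (b' ∘ nn) (H2 : Set (Sym2 V)) := by
    apply LinearIndepOn.comp_of_image _ hinj
    apply hx2.mono
    rintro _ ⟨e, he, rfl⟩
    obtain ⟨u, hu, hn, he1⟩ := hnn e he
    have ha := hH2H e he
    rw [he1] at ha
    exact h3 u hu _ hn ha
  rw [linearIndepOn_finset_iff] at hli2
  have hz : ∑ e ∈ H2, g e • (b' ∘ nn) e = 0 := by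
    funext j
    have h := hc 0 j.succ
    rw [Finset.sum_apply, Pi.zero_apply, ← h, hH2, Finset.sum_filter]
    refine Finset.sum_congr rfl fun e he => ?_
    split_ifs with hcond
    · have he2 : e ∈ H2 := by rw [hH2, Finset.mem_filter]; exact ⟨he, hcond⟩
      obtain ⟨u, hu, hn, he1⟩ := hnn e he2
      have hnU : nn e ∉ U := fun h => hn (hUT h)
      conv_rhs => rw [he1]
      simp [b, hu, hUT hu, hn, hnU]
      left
      rw [← he1]
    · by_cases hc1 : ∃ x ∈ e, x ∈ U
      · have : ∀ x ∈ e, x ∈ T := by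
          intro x hx
          by_contra hxT
          exact hcond ⟨hc1, x, hx, hxT⟩
        rw [hT e he this]
        simp
      · push Not at hc1
        rw [hU e he hc1]
        simp
  intro e he
  by_cases hc1 : ∃ x ∈ e, x ∈ U
  · by_cases heT : ∀ x ∈ e, x ∈ T
    · exact hT e he heT
    · push Not at heT
      exact hli2 g hz e (by rw [hH2, Finset.mem_filter]; exact ⟨he, hc1, heT⟩)
  · push Not at hc1
    exact hU e he hc1


/-! ### Combinatorics of independent sets -/

section Comb

variable {V : Type*} [Fintype V] [DecidableEq V]

/-- The neighbours of `v`. -/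
def nb (H : Finset (Sym2 V)) (v : V) : Finset V := Finset.univ.filter fun n => s(v, n) ∈ H

lemma mem_nb {H : Finset (Sym2 V)} {v n : V} : n ∈ nb H v ↔ s(v, n) ∈ H := by simp [nb]

lemma card_nb (H : Finset (Sym2 V)) (v : V) : (nb H v).card = degIn H v := by
  have h : (nb H v).image (fun n => s(v, n)) = H.filter fun e => v ∈ e := by
    ext e
    simp only [Finset.mem_image, mem_nb, Finset.mem_filter]
    constructor
    · rintro ⟨n, hn, rfl⟩
      exact ⟨hn, by simp⟩
    · rintro ⟨he, hv⟩
      obtain ⟨n, rfl⟩ := hv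
      exact ⟨n, he, rfl⟩
  rw [degIn, ← h, Finset.card_image_of_injective]
  intro a b hab
  exact Sym2.congr_right.1 hab

/-- Delete all edges at `v`. -/
def delV (H : Finset (Sym2 V)) (v : V) : Finset (Sym2 V) := H.filter fun e => v ∉ e

lemma delV_subset (H : Finset (Sym2 V)) (v : V) : delV H v ⊆ H := Finset.filter_subset _ _

lemma card_delV (H : Finset (Sym2 V)) (v : V) : (delV H v).card + degIn H v = H.card := by
  rw [delV, degIn, add_comm]
  exact Finset.card_filter_add_card_filter_not _

lemma degIn_mono {H H' : Finset (Sym2 V)} (h : H' ⊆ H) (v : V) : degIn H' v ≤ degIn H v :=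
  Finset.card_le_card (Finset.filter_subset_filter _ h)

lemma IndS.mono {m : ℕ} {H H' : Finset (Sym2 V)} (hH : IndS m H) (h : H' ⊆ H) : IndS m H' := by
  obtain ⟨b, hb⟩ := hH
  exact ⟨b, hb.mono (by exact_mod_cast h)⟩

lemma IndS.succ {m : ℕ} {H : Finset (Sym2 V)} (hH : IndS m H) : IndS (m + 1) H := by
  refine IndS.ext H ∅ ∅ (by simp) ?_ (by simp) ∅ (by simp) (by simp) H hH (by simp +contextual)
  intro e he e' he' h
  induction e using Sym2.ind with
  | _ u v => simpa using h u (by simp)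

lemma IndS.extA {m : ℕ} {H : Finset (Sym2 V)} (hs : ∀ e ∈ H, ¬ e.IsDiag) (v : V)
    (hv : degIn H v ≤ m) (h : IndS m (delV H v)) : IndS (m + 1) H := by
  refine IndS.ext H {v} {v} (by simp) ?_ (by simp) (nb H v) (by rwa [card_nb]) ?_ _ h ?_
  · intro e he e' he' h
    exfalso
    revert h he
    induction e using Sym2.ind with
    | _ a b =>
      intro he h
      have := hs _ he
      simp_all
  · intro u hu n hn hun
    rw [Finset.mem_singleton] at hu
    subst hu
    exact mem_nb.2 hun
  · intro e he hx _
    rw [delV, Finset.mem_filter]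
    exact ⟨he, fun h => hx v h (by simp)⟩

lemma IndS.extA' {m : ℕ} {H : Finset (Sym2 V)} (hs : ∀ e ∈ H, ¬ e.IsDiag) (v : V)
    (hv : degIn H v ≤ m + 1) (h : IndS m (delV H v)) : IndS (m + 1) H := by
  rcases Nat.lt_or_ge (degIn H v) 1 with h0 | h0
  · exact IndS.extA hs v (by omega) h
  rw [← card_nb] at h0 hv
  obtain ⟨x, hx⟩ := Finset.card_pos.1 h0
  refine IndS.ext H {v} {v, x} (by simp) ?_ (by simp) ((nb H v).erase x)
    (by rw [Finset.card_erase_of_mem hx]; omega) ?_ _ h ?_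
  · have key : ∀ e ∈ H, (∀ z ∈ e, z ∈ ({v, x} : Finset V)) → e = s(v, x) := by
      intro e
      induction e using Sym2.ind with
      | _ a b =>
        intro he h
        have h1 := hs _ he
        have ha := h a (by simp)
        have hb := h b (by simp)
        simp only [Finset.mem_insert, Finset.mem_singleton, Sym2.mk_isDiag_iff] at ha hb h1
        rcases ha with rfl | rfl <;> rcases hb with rfl | rfl <;> simp_all
    intro e he e' he' h h'
    rw [key e he h, key e' he' h']
  · intro u hu n hn hun
    rw [Finset.mem_singleton] at hu
    subst hu
    rw [Finset.mem_erase]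
    exact ⟨fun h => hn (by simp [h]), mem_nb.2 hun⟩
  · intro e he hx _
    rw [delV, Finset.mem_filter]
    exact ⟨he, fun h => hx v h (by simp)⟩

lemma IndS.extB {m : ℕ} {H : Finset (Sym2 V)} (hs : ∀ e ∈ H, ¬ e.IsDiag) (v x y : V)
    (hx : x ≠ v) (hy : y ≠ v) (hvx : s(v, x) ∉ H) (hvy : s(v, y) ∉ H)
    (hv : degIn H v ≤ m) (h : IndS m ((delV H v).erase s(x, y))) : IndS (m + 1) H := by
  refine IndS.ext H {v} {v, x, y} (by simp) ?_ (by simp) (nb H v) (by rwa [card_nb]) ?_ _ h ?_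
  · have key : ∀ e ∈ H, (∀ z ∈ e, z ∈ ({v, x, y} : Finset V)) → e = s(x, y) := by
      intro e
      induction e using Sym2.ind with
      | _ a b =>
        intro he h
        have h1 := hs _ he
        have ha := h a (by simp)
        have hb := h b (by simp)
        simp only [Finset.mem_insert, Finset.mem_singleton, Sym2.mk_isDiag_iff] at ha hb h1
        have hsw : s(b, a) ∈ H := by rwa [Sym2.eq_swap]
        rcases ha with rfl | rfl | rfl <;> rcases hb with rfl | rfl | rfl <;>
          first
            | exact absurd rfl h1
            | exact absurd he hvx
            | exact absurd he hvy
            | exact absurd hsw hvx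
            | exact absurd hsw hvy
            | rfl
            | exact Sym2.eq_swap
    intro e he e' he' h h'
    rw [key e he h, key e' he' h']
  · intro u hu n hn hun
    rw [Finset.mem_singleton] at hu
    subst hu
    exact mem_nb.2 hun
  · intro e he hx hx'
    rw [Finset.mem_erase, delV, Finset.mem_filter]
    refine ⟨?_, he, fun h => hx v h (by simp)⟩
    rintro rfl
    obtain ⟨z, hz, hzT⟩ := hx'
    apply hzT
    simp only [Sym2.mem_iff] at hz
    rcases hz with rfl | rfl <;> simp

/-- Matching step. -/
lemma IndS.extC {m : ℕ} (hm : 2 ≤ m) {H : Finset (Sym2 V)} (hs : ∀ e ∈ H, ¬ e.IsDiag)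
    (hdeg : ∀ v, degIn H v ≤ 1) (e1 e2 f : Sym2 V) (h1 : e1 ∈ H) (h2 : e2 ∈ H) (hf : f ∈ H)
    (h12 : e1 ≠ e2) (h1f : e1 ≠ f) (h2f : e2 ≠ f)
    (h : IndS m (((H.erase e1).erase e2).erase f)) : IndS (m + 1) H := by
  have huniq : ∀ v, ∀ e ∈ H, ∀ e' ∈ H, v ∈ e → v ∈ e' → e = e' := by
    intro v e he e' he' hv hv'
    have := hdeg v
    rw [degIn, Finset.card_le_one] at this
    exact this e (by simp [he, hv]) e' (by simp [he', hv'])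
  induction e1 using Sym2.ind with
  | _ u1 w1 =>
  induction e2 using Sym2.ind with
  | _ u2 w2 =>
  induction f using Sym2.ind with
  | _ x y =>
  have hT : ∀ e ∈ H, (∀ z ∈ e, z ∈ ({u1, u2, x, y} : Finset V)) → e = s(x, y) := by
    intro e he hz
    by_cases hxe : x ∈ e
    · exact huniq x e he _ hf hxe (by simp)
    by_cases hye : y ∈ e
    · exact huniq y e he _ hf hye (by simp)
    exfalso
    revert hxe hye hz
    have hd := hs e he
    revert hd he
    induction e using Sym2.ind with
    | _ a b =>
      intro he hd hz hxe hye
      have ha := hz a (by simp)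
      have hb := hz b (by simp)
      have ha' := huniq a _ he
      simp only [Finset.mem_insert, Finset.mem_singleton] at ha hb
      simp only [Sym2.mem_iff, not_or] at hxe hye
      rw [Sym2.mk_isDiag_iff] at hd
      have ha2 : a = u1 ∨ a = u2 := by
        rcases ha with h | h | h | h
        · exact Or.inl h
        · exact Or.inr h
        · exact absurd h.symm hxe.1
        · exact absurd h.symm hye.1
      have hb2 : b = u1 ∨ b = u2 := by
        rcases hb with h | h | h | h
        · exact Or.inl h
        · exact Or.inr h
        · exact absurd h.symm hxe.2
        · exact absurd h.symm hye.2
      apply h12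
      rcases ha2 with rfl | rfl <;> rcases hb2 with rfl | rfl
      · exact absurd rfl hd
      · rw [← huniq a _ he _ h1 (by simp) (by simp), ← huniq b _ he _ h2 (by simp) (by simp)]
      · rw [← huniq a _ he _ h2 (by simp) (by simp), ← huniq b _ he _ h1 (by simp) (by simp)]
      · exact absurd rfl hd
  refine IndS.ext H {u1, u2} {u1, u2, x, y} ?_ ?_ ?_ {w1, w2}
    ((Finset.card_le_two).trans hm) ?_ _ h ?_
  · intro z hz
    simp only [Finset.mem_insert, Finset.mem_singleton] at hz ⊢
    tauto
  · intro e he e' he' h h'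
    rw [hT e he h, hT e' he' h']
  · intro u hu u' hu' n hn h h'
    exact Sym2.congr_left.1 (huniq n _ h _ h' (by simp) (by simp))
  · intro u hu n hn hun
    simp only [Finset.mem_insert, Finset.mem_singleton] at hu ⊢
    rcases hu with rfl | rfl
    · exact Or.inl (Sym2.congr_right.1 (huniq u _ hun _ h1 (by simp) (by simp)))
    · exact Or.inr (Sym2.congr_right.1 (huniq u _ hun _ h2 (by simp) (by simp)))
  · intro e he hx hx'
    simp only [Finset.mem_erase]
    refine ⟨?_, ?_, ?_, he⟩
    · rintro rfl
      obtain ⟨z, hz, hzT⟩ := hx'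
      apply hzT
      simp only [Sym2.mem_iff] at hz
      rcases hz with rfl | rfl <;> simp
    · rintro rfl
      exact hx u2 (by simp) (by simp)
    · rintro rfl
      exact hx u1 (by simp) (by simp)

lemma indS_zero : IndS 0 (∅ : Finset (Sym2 V)) := ⟨fun _ _ => 0, by simp⟩

lemma indS_one {H : Finset (Sym2 V)} (hc : H.card ≤ 1) : IndS 1 H := by
  refine IndS.ext H ∅ Finset.univ (by simp) ?_ (by simp) ∅ (by simp) (by simp) ∅ indS_zero
    (by simp)
  intro e he e' he' _ _
  exact Finset.card_le_one.1 hc e he e' he'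

lemma indS_two {H : Finset (Sym2 V)} (hs : ∀ e ∈ H, ¬ e.IsDiag) (hc : H.card ≤ 3)
    (hdeg : ∀ v, degIn H v ≤ 2) : IndS 2 H := by
  by_cases h2 : ∃ v, degIn H v = 2
  · obtain ⟨v, hv⟩ := h2
    refine IndS.extA' hs v (by omega) (indS_one ?_)
    have := card_delV H v
    omega
  push Not at h2
  have hdeg1 : ∀ v, degIn H v ≤ 1 := fun v => by have := hdeg v; have := h2 v; omega
  by_cases h1 : H.card ≤ 1
  · exact (indS_one h1).succ
  push Not at h1
  obtain ⟨e, he, f, hf, hef⟩ := Finset.one_lt_card.1 h1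
  have huniq : ∀ v, ∀ e ∈ H, ∀ e' ∈ H, v ∈ e → v ∈ e' → e = e' := by
    intro v e he e' he' hv hv'
    have := hdeg1 v
    rw [degIn, Finset.card_le_one] at this
    exact this e (by simp [he, hv]) e' (by simp [he', hv'])
  induction e using Sym2.ind with
  | _ v w =>
  induction f using Sym2.ind with
  | _ x y =>
  refine IndS.extB hs v x y ?_ ?_ ?_ ?_ (hdeg1 v) (indS_one ?_)
  · rintro rfl
    exact hef (huniq x _ he _ hf (by simp) (by simp))
  · rintro rfl
    exact hef (huniq y _ he _ hf (by simp) (by simp))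
  · intro h
    apply hef
    rw [← huniq v _ h _ he (by simp) (by simp), huniq x _ h _ hf (by simp) (by simp)]
  · intro h
    apply hef
    rw [← huniq v _ h _ he (by simp) (by simp), huniq y _ h _ hf (by simp) (by simp)]
  · have hsub : (delV H v).erase s(x, y) ⊆ (H.erase s(v, w)).erase s(x, y) := by
      apply Finset.erase_subset_erase
      intro e he
      rw [delV, Finset.mem_filter] at he
      rw [Finset.mem_erase]
      refine ⟨?_, he.1⟩
      rintro rfl
      exact he.2 (by simp)
    have := Finset.card_le_card hsub
    have hm : s(x, y) ∈ H.erase s(v, w) := Finset.mem_erase.2 ⟨hef.symm, hf⟩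
    rw [Finset.card_erase_of_mem hm, Finset.card_erase_of_mem he] at this
    omega

lemma indS_step {m : ℕ} (hm : 2 ≤ m) {H : Finset (Sym2 V)} (hs : ∀ e ∈ H, ¬ e.IsDiag)
    (hc : H.card ≤ 3 * m) (hdeg : ∀ v, degIn H v ≤ 2)
    (ih : ∀ H' ⊆ H, H'.card ≤ 3 * m - 3 → IndS m H') : IndS (m + 1) H := by
  by_cases h2 : ∃ v, degIn H v = 2
  · obtain ⟨v, hv⟩ := h2
    have hcd := card_delV H v
    by_cases hf : ∃ x y, s(x, y) ∈ H ∧ x ≠ v ∧ y ≠ v ∧ s(v, x) ∉ H ∧ s(v, y) ∉ H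
    · obtain ⟨x, y, hxy, hx, hy, hvx, hvy⟩ := hf
      refine IndS.extB hs v x y hx hy hvx hvy (by omega) (ih _ ?_ ?_)
      · exact (Finset.erase_subset _ _).trans (delV_subset H v)
      · rw [Finset.card_erase_of_mem]
        · omega
        · rw [delV, Finset.mem_filter]
          refine ⟨hxy, ?_⟩
          simp only [Sym2.mem_iff, not_or]
          exact ⟨hx.symm, hy.symm⟩
    · have hcov : H ⊆ (nb H v).biUnion fun a => H.filter fun e => a ∈ e := by
        intro e
        induction e using Sym2.ind with
        | _ x y =>
          intro he
          simp only [Finset.mem_biUnion, Finset.mem_filter, mem_nb]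
          by_contra hcon
          push Not at hcon
          apply hf
          refine ⟨x, y, he, ?_, ?_, ?_, ?_⟩
          · rintro rfl
            exact hcon y he he (by simp)
          · rintro rfl
            rw [Sym2.eq_swap] at he
            exact hcon x he (by rwa [Sym2.eq_swap]) (by simp)
          · exact fun h => hcon x h he (by simp)
          · exact fun h => hcon y h he (by simp)
      have h4 : H.card ≤ 4 := by
        refine (Finset.card_le_card hcov).trans ?_
        refine (Finset.card_biUnion_le_card_mul _ _ 2 fun a _ => hdeg a).trans ?_
        rw [card_nb, hv]
      exact IndS.extA hs v (by omega) (ih _ (delV_subset H v) (by omega))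
  · push Not at h2
    have hdeg1 : ∀ v, degIn H v ≤ 1 := fun v => by have := hdeg v; have := h2 v; omega
    by_cases h3 : H.card ≤ 2
    · exact (ih H subset_rfl (by omega)).succ
    push Not at h3
    obtain ⟨e1, e2, f, h1, h2, hf, h12, h1f, h2f⟩ := Finset.two_lt_card_iff.1 h3
    refine IndS.extC hm hs hdeg1 e1 e2 f h1 h2 hf h12 h1f h2f (ih _ ?_ ?_)
    · exact (Finset.erase_subset _ _).trans
        ((Finset.erase_subset _ _).trans (Finset.erase_subset _ _))
    · rw [Finset.card_erase_of_mem (by simp [hf, h1f.symm, h2f.symm]),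
        Finset.card_erase_of_mem (by simp [h2, h12.symm]), Finset.card_erase_of_mem h1]
      omega

lemma indS_three_two {H : Finset (Sym2 V)} (hs : ∀ e ∈ H, ¬ e.IsDiag) (hc : H.card ≤ 6)
    (hdeg : ∀ v, degIn H v ≤ 2) : IndS 3 H :=
  indS_step le_rfl hs hc hdeg fun _ hH' hc' =>
    indS_two (fun e he => hs e (hH' he)) (by omega) fun v => (degIn_mono hH' v).trans (hdeg v)

lemma indS_four_two {H : Finset (Sym2 V)} (hs : ∀ e ∈ H, ¬ e.IsDiag) (hc : H.card ≤ 9)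
    (hdeg : ∀ v, degIn H v ≤ 2) : IndS 4 H :=
  indS_step (by norm_num) hs hc hdeg fun _ hH' hc' =>
    indS_three_two (fun e he => hs e (hH' he)) (by omega) fun v =>
      (degIn_mono hH' v).trans (hdeg v)

lemma indS_three {H : Finset (Sym2 V)} (hs : ∀ e ∈ H, ¬ e.IsDiag) (hc : H.card ≤ 6)
    (hdeg : ∀ v, degIn H v ≤ 3)
    (hadj : ∀ v w, v ≠ w → degIn H v = 3 → degIn H w = 3 → s(v, w) ∈ H) : IndS 3 H := by
  by_cases h3 : ∃ v, degIn H v = 3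
  · obtain ⟨v, hv⟩ := h3
    have hcd := card_delV H v
    refine IndS.extA' hs v (by omega) (indS_two (fun e he => hs e (delV_subset H v he))
      (by omega) ?_)
    intro w
    by_contra hw
    push Not at hw
    have h1 := degIn_mono (delV_subset H v) w
    have h2 := hdeg w
    have hvw : v ≠ w := by
      rintro rfl
      have : degIn (delV H v) v = 0 := by
        rw [degIn, delV, Finset.filter_filter, Finset.card_eq_zero]
        ext e
        simp
      omega
    have had := hadj v w hvw hv (by omega)
    have hlt : degIn (delV H v) w < degIn H w := by
      apply Finset.card_lt_card
      refine (Finset.ssubset_iff_of_subset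
        (Finset.filter_subset_filter _ (delV_subset H v))).2 ⟨s(v, w), ?_, ?_⟩
      · simp [had]
      · simp [delV]
    omega
  · push Not at h3
    exact indS_three_two hs hc fun v => by have := hdeg v; have := h3 v; omega

lemma indS_four {H : Finset (Sym2 V)} (hs : ∀ e ∈ H, ¬ e.IsDiag) (hc : H.card ≤ 9)
    (hdeg : ∀ v, degIn H v ≤ 3) : IndS 4 H ∨
    ∃ A B : Finset V, A.card = 3 ∧ B.card = 3 ∧ ∀ a ∈ A, ∀ b ∈ B, s(a, b) ∈ H := by
  by_cases h3 : ∃ v, degIn H v = 3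
  swap
  · push Not at h3
    exact Or.inl (indS_four_two hs hc fun v => by have := hdeg v; have := h3 v; omega)
  obtain ⟨v, hv⟩ := h3
  have hcd := card_delV H v
  by_cases hf : ∃ x y, s(x, y) ∈ H ∧ x ≠ v ∧ y ≠ v ∧ s(v, x) ∉ H ∧ s(v, y) ∉ H
  · left
    obtain ⟨x, y, hxy, hx, hy, hvx, hvy⟩ := hf
    have hsub : (delV H v).erase s(x, y) ⊆ H :=
      (Finset.erase_subset _ _).trans (delV_subset H v)
    have hcard : ((delV H v).erase s(x, y)).card ≤ 5 := by
      rw [Finset.card_erase_of_mem]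
      · omega
      · rw [delV, Finset.mem_filter]
        refine ⟨hxy, ?_⟩
        simp only [Sym2.mem_iff, not_or]
        exact ⟨hx.symm, hy.symm⟩
    refine IndS.extB hs v x y hx hy hvx hvy (by omega) (indS_three (fun e he => hs e (hsub he))
      (by omega) (fun w => (degIn_mono hsub w).trans (hdeg w)) ?_)
    intro a b hab ha hb
    by_contra hcon
    generalize (delV H v).erase s(x, y) = H1 at *
    have hdisj : Disjoint (H1.filter fun e => a ∈ e) (H1.filter fun e => b ∈ e) := by
      rw [Finset.disjoint_left]
      intro e he he'
      rw [Finset.mem_filter] at he he'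
      have := (Sym2.mem_and_mem_iff hab).1 ⟨he.2, he'.2⟩
      exact hcon (this ▸ he.1)
    have h1 := Finset.card_union_of_disjoint hdisj
    have h2 : ((H1.filter fun e => a ∈ e) ∪ (H1.filter fun e => b ∈ e)).card ≤ H1.card :=
      Finset.card_le_card (Finset.union_subset (Finset.filter_subset _ _)
        (Finset.filter_subset _ _))
    simp only [degIn] at ha hb
    omega
  · by_cases hbad : ∃ a b, a ≠ b ∧ degIn (delV H v) a = 3 ∧ degIn (delV H v) b = 3 ∧
        s(a, b) ∉ delV H v
    · right
      obtain ⟨a, b, hab, ha, hb, -⟩ := hbad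
      have key : ∀ w, degIn (delV H v) w = 3 → w ≠ v ∧ nb H w = nb H v := by
        intro w hw
        have hwv : w ≠ v := by
          rintro rfl
          have : degIn (delV H w) w = 0 := by
            rw [degIn, delV, Finset.filter_filter, Finset.card_eq_zero]
            ext e
            simp
          omega
        refine ⟨hwv, ?_⟩
        have hnot : s(v, w) ∉ H := by
          intro had
          have hlt : degIn (delV H v) w < degIn H w := by
            apply Finset.card_lt_card
            refine (Finset.ssubset_iff_of_subset
              (Finset.filter_subset_filter _ (delV_subset H v))).2 ⟨s(v, w), ?_, ?_⟩
            · simp [had]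
            · simp [delV]
          have := hdeg w
          omega
        have hw3 : degIn H w = 3 := by
          have := hdeg w
          have := degIn_mono (delV_subset H v) w
          omega
        apply Finset.eq_of_subset_of_card_le
        · intro x hx
          rw [mem_nb] at hx ⊢
          by_contra hvx
          refine hf ⟨w, x, hx, hwv, ?_, hnot, hvx⟩
          rintro rfl
          rw [Sym2.eq_swap] at hx
          exact hnot hx
        · rw [card_nb, card_nb, hv, hw3]
      obtain ⟨hav, hna⟩ := key a ha
      obtain ⟨hbv, hnb⟩ := key b hb
      refine ⟨{v, a, b}, nb H v, ?_, by rw [card_nb, hv], ?_⟩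
      · rw [Finset.card_eq_three]
        exact ⟨v, a, b, hav.symm, hbv.symm, hab, rfl⟩
      · intro c hc n hn
        simp only [Finset.mem_insert, Finset.mem_singleton] at hc
        rcases hc with rfl | rfl | rfl
        · exact mem_nb.1 hn
        · exact mem_nb.1 (hna ▸ hn)
        · exact mem_nb.1 (hnb ▸ hn)
    · left
      push Not at hbad
      refine IndS.extA hs v (by omega) (indS_three (fun e he => hs e (delV_subset H v he))
        (by omega) (fun w => (degIn_mono (delV_subset H v) w).trans (hdeg w)) ?_)
      exact fun a b hab ha hb => hbad a b hab ha hb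

end Comb


/-! ### Rigidity matrices -/

section Rig

variable {V : Type*} [Fintype V] [DecidableEq V] {d : ℕ}

lemma rigRow_mk (p : V → Fin d → ℝ) (u v : V) (wi : V × Fin d) :
    rigRow d p s(u, v) wi =
      ((if wi.1 = u then (1 : ℝ) else 0) - (if wi.1 = v then (1 : ℝ) else 0)) *
        (p u wi.2 - p v wi.2) := rfl

lemma rrk_mono (p : V → Fin d → ℝ) {F F' : Set (Sym2 V)} (h : F ⊆ F') :
    rrk d p F ≤ rrk d p F' :=
  Submodule.finrank_mono (Submodule.span_mono (Set.image_mono h))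

lemma rrk_union_le (p : V → Fin d → ℝ) (F : Set (Sym2 V)) (J : Finset (Sym2 V)) :
    rrk d p (F ∪ J) ≤ rrk d p F + J.card := by
  classical
  rw [rrk, Set.image_union, Submodule.span_union]
  refine (Submodule.finrank_add_le_finrank_add_finrank _ _).trans ?_
  refine Nat.add_le_add_left ?_ _
  have h := finrank_span_finset_le_card (R := ℝ) (J.image (rigRow d p))
  rw [Set.finrank, Finset.coe_image] at h
  exact h.trans Finset.card_image_le

lemma rrk_le_add_sdiff (p : V → Fin d → ℝ) {F F' : Finset (Sym2 V)} :
    rrk d p (F' : Set (Sym2 V)) ≤ rrk d p (F : Set (Sym2 V)) + (F' \ F).card := by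
  refine le_trans (rrk_mono p ?_) (rrk_union_le p F (F' \ F))
  intro e he
  by_cases h : e ∈ F
  · exact Or.inl h
  · right
    simpa [h] using he

/-- General position. -/
def GP (p : V → Fin d → ℝ) : Prop :=
  ∀ v (N : Finset V), v ∉ N → N.card ≤ d →
    LinearIndepOn ℝ (fun u => p v - p u : V → Fin d → ℝ) (N : Set V)

lemma Generic.gp {p : V → Fin d → ℝ} (hp : Generic d p) : GP p := by
  intro v N hv hN
  let M : ↥(N : Set V) → Fin d → MvPolynomial (V × Fin d) ℚ :=
    fun u i => MvPolynomial.X (v, i) - MvPolynomial.X (u.1, i)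
  obtain ⟨f⟩ : Nonempty ((N : Set V) ↪ Fin d) :=
    Function.Embedding.nonempty_of_card_le (by simpa using hN)
  let x0 : V × Fin d → ℝ := fun vi => if h : vi.1 ∈ N then
    (if f ⟨vi.1, h⟩ = vi.2 then -1 else 0) else 0
  have h0 : LinearIndependent ℝ (fun (u : (N : Set V)) i =>
      (MvPolynomial.aeval x0 (M u i) : ℝ)) := by
    have h1 := (Pi.basisFun ℝ (Fin d)).linearIndependent.comp f f.injective
    convert h1 using 1
    funext u i
    have hu : u.1 ∈ N := u.2
    by_cases hh : f u = i
    · simp [M, x0, hv, Pi.single_apply, hh]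
    · have hh' : ¬ i = f u := fun h => hh h.symm
      simp [M, x0, hv, Pi.single_apply, hh, hh']
  have h2 := (genP_li M _ h0).of_algInd _ hp
  have h3 : (fun u : ↥(N : Set V) => p v - p u.1) = fun u i =>
      MvPolynomial.aeval (fun vi : V × Fin d => p vi.1 vi.2) (M u i) := by
    funext u i
    simp [M]
  beta_reduce at h2
  rw [← h3] at h2
  exact h2

lemma star_rank (p : V → Fin d → ℝ) (v : V) (F : Finset (Sym2 V)) (hF : ∀ e ∈ F, v ∉ e)
    (N : Finset V) (hv : v ∉ N)
    (hN : LinearIndepOn ℝ (fun u => p v - p u : V → Fin d → ℝ) (N : Set V)) :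
    rrk d p (F : Set (Sym2 V)) + N.card ≤
      rrk d p ((F ∪ N.image fun u => s(v, u) : Finset (Sym2 V)) : Set (Sym2 V)) := by
  let π : (V × Fin d → ℝ) →ₗ[ℝ] (Fin d → ℝ) := LinearMap.funLeft ℝ ℝ fun i => (v, i)
  set W := Submodule.span ℝ (rigRow d p ''
    ((F ∪ N.image fun u => s(v, u) : Finset (Sym2 V)) : Set (Sym2 V))) with hW
  set W0 := Submodule.span ℝ (rigRow d p '' (F : Set (Sym2 V))) with hW0
  have hle : W0 ≤ W := Submodule.span_mono (Set.image_mono (by simp))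
  have h1 := LinearMap.finrank_range_add_finrank_ker (π.domRestrict W)
  have h2 : N.card ≤ Module.finrank ℝ (LinearMap.range (π.domRestrict W)) := by
    have h3 : Module.finrank ℝ (Submodule.span ℝ
        (Set.range fun u : (N : Set V) => p v - p u)) = N.card := by
      have := finrank_span_eq_card (R := ℝ) hN
      simpa using this
    rw [← h3]
    apply Submodule.finrank_mono
    rw [Submodule.span_le]
    rintro _ ⟨⟨u, hu⟩, rfl⟩
    refine ⟨⟨rigRow d p s(v, u), Submodule.subset_span ⟨_, ?_, rfl⟩⟩, ?_⟩
    · have hu' : u ∈ N := hu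
      rw [Finset.coe_union]
      right
      simp only [Finset.coe_image, Set.mem_image]
      exact ⟨u, hu', rfl⟩
    · have hne : v ≠ u := fun h => hv (h ▸ hu)
      ext i
      simp [π, LinearMap.funLeft_apply, rigRow_mk, hne]
  have h3 : Module.finrank ℝ W0 ≤ Module.finrank ℝ (LinearMap.ker (π.domRestrict W)) := by
    rw [← (Submodule.comapSubtypeEquivOfLe hle).finrank_eq]
    apply Submodule.finrank_mono
    rintro ⟨x, hxW⟩ hx
    have hx0 : x ∈ W0 := hx
    have : W0 ≤ LinearMap.ker π := by
      rw [hW0, Submodule.span_le]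
      rintro _ ⟨e, he, rfl⟩
      have hve := hF e he
      revert hve
      clear he
      induction e using Sym2.ind with
      | _ a b =>
        intro hve
        simp only [Sym2.mem_iff, not_or] at hve
        rw [SetLike.mem_coe, LinearMap.mem_ker]
        ext i
        simp [π, LinearMap.funLeft_apply, rigRow_mk, hve.1, hve.2]
    exact this hx0
  change Module.finrank ℝ W0 + N.card ≤ Module.finrank ℝ W
  omega

lemma mem_cliqueOn {W : Finset V} {e : Sym2 V} :
    e ∈ cliqueOn W ↔ ¬ e.IsDiag ∧ ∀ x ∈ e, x ∈ W := by
  induction e using Sym2.ind with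
  | _ u v =>
    simp only [cliqueOn, Finset.mem_image, Finset.mem_filter, Finset.mem_product, Prod.exists,
      Sym2.mk_isDiag_iff, Sym2.mem_iff, forall_eq_or_imp, forall_eq]
    constructor
    · rintro ⟨a, b, ⟨⟨ha, hb⟩, hab⟩, h⟩
      rcases Sym2.eq_iff.1 h with ⟨rfl, rfl⟩ | ⟨rfl, rfl⟩
      · exact ⟨hab, ha, hb⟩
      · exact ⟨fun h => hab h.symm, hb, ha⟩
    · rintro ⟨h, hu, hv⟩
      exact ⟨u, v, ⟨⟨hu, hv⟩, h⟩, rfl⟩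

/-- The rank of the complete graph on `n` vertices. -/
def krank (d n : ℕ) : ℕ := ∑ i ∈ Finset.range n, min i d

lemma krank_eq (t : ℕ) : krank d (d + t) + (d + 1).choose 2 = d * (d + t) := by
  induction t with
  | zero =>
    have h1 : krank d (d + 0) = ∑ i ∈ Finset.range d, i :=
      Finset.sum_congr rfl fun i hi => min_eq_left (Finset.mem_range.1 hi).le
    rw [h1]
    clear h1
    induction d with
    | zero => rfl
    | succ e ih =>
      rw [Finset.sum_range_succ, Nat.choose_succ_succ, Nat.choose_one_right]
      simp only [add_zero] at ih ⊢
      nlinarith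
  | succ t ih =>
    rw [krank, ← add_assoc, Finset.sum_range_succ, ← krank, min_eq_right (by omega)]
    rw [mul_add d (d + t) 1]
    omega

lemma cliqueOn_insert_sub (v : V) (W N : Finset V) (hv : v ∉ W) (hN : N ⊆ W) :
    cliqueOn W ∪ N.image (fun u => s(v, u)) ⊆ cliqueOn (insert v W) := by
  intro e he
  rcases Finset.mem_union.1 he with he | he
  · rw [mem_cliqueOn] at he ⊢
    exact ⟨he.1, fun x hx => Finset.mem_insert_of_mem (he.2 x hx)⟩
  · obtain ⟨u, hu, rfl⟩ := Finset.mem_image.1 he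
    rw [mem_cliqueOn]
    have huW := hN hu
    refine ⟨?_, ?_⟩
    · rw [Sym2.mk_isDiag_iff]
      rintro rfl
      exact hv huW
    · intro x hx
      rcases Sym2.mem_iff.1 hx with rfl | rfl
      · simp
      · simp [huW]

lemma krank_le {p : V → Fin d → ℝ} (hp : GP p) (W : Finset V) :
    krank d W.card ≤ rrk d p (cliqueOn W : Set (Sym2 V)) := by
  induction W using Finset.induction_on with
  | empty => simp [krank]
  | insert v W hv ih =>
    obtain ⟨N, hNW, hN⟩ := Finset.exists_subset_card_eq (min_le_left W.card d)
    have hvN : v ∉ N := fun h => hv (hNW h)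
    have h1 := star_rank p v (cliqueOn W)
      (fun e he h => hv ((mem_cliqueOn.1 he).2 v h)) N hvN
      (hp v N hvN (hN ▸ min_le_right _ _))
    have h2 : rrk d p _ ≤ rrk d p _ :=
      rrk_mono p (Finset.coe_subset.2 (cliqueOn_insert_sub v W N hv hNW))
    rw [Finset.card_insert_of_notMem hv, krank, Finset.sum_range_succ, ← krank]
    omega

lemma stress_mem (p : V → Fin d → ℝ) (ω : V → V → ℝ) (hsym : ∀ u v, ω u v = ω v u)
    (hω : ∀ w i, ∑ v, ω w v * (p w i - p v i) = 0) (x y : V) (hxy : x ≠ y) (h0 : ω x y ≠ 0)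
    (G : Set (Sym2 V))
    (hG : ∀ u v, u ≠ v → ω u v ≠ 0 → s(u, v) ≠ s(x, y) → s(u, v) ∈ G) :
    rigRow d p s(x, y) ∈ Submodule.span ℝ (rigRow d p '' G) := by
  have hsum : ∑ q : V × V, ω q.1 q.2 • rigRow d p s(q.1, q.2) = 0 := by
    funext ⟨w, i⟩
    rw [Finset.sum_apply, Fintype.sum_prod_type]
    simp only [Pi.smul_apply, rigRow_mk, smul_eq_mul, Pi.zero_apply]
    have h1 : ∀ u v, ω u v * (((if w = u then (1 : ℝ) else 0) - (if w = v then (1 : ℝ) else 0)) *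
        (p u i - p v i)) = (if w = u then ω u v * (p u i - p v i) else 0) +
          (if w = v then ω v u * (p v i - p u i) else 0) := by
      intro u v
      rw [hsym v u]
      split_ifs <;> ring
    simp only [h1, Finset.sum_add_distrib]
    have h2 : ∑ u, ∑ v, (if w = u then ω u v * (p u i - p v i) else 0) = 0 := by
      rw [Finset.sum_eq_single w]
      · simpa using hω w i
      · intro u _ hu
        simp [Ne.symm hu]
      · simp
    rw [h2, Finset.sum_comm, h2, add_zero]
  have hne : (x, y) ≠ (y, x) := by
    intro h
    exact hxy (Prod.ext_iff.1 h).1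
  rw [← Finset.sum_add_sum_compl {(x, y), (y, x)}, Finset.sum_pair hne] at hsum
  simp only at hsum
  rw [hsym y x, Sym2.eq_swap (a := y) (b := x), ← add_smul] at hsum
  have hrest : ∑ q ∈ ({(x, y), (y, x)} : Finset (V × V))ᶜ, ω q.1 q.2 • rigRow d p s(q.1, q.2) ∈
      Submodule.span ℝ (rigRow d p '' G) := by
    refine Submodule.sum_mem _ fun q hq => ?_
    obtain ⟨u, v⟩ := q
    simp only [Finset.mem_compl, Finset.mem_insert, Finset.mem_singleton, not_or,
      Prod.mk.injEq] at hq
    by_cases huv : u = v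
    · have : rigRow d p s(u, v) = 0 := by
        funext wi
        rw [rigRow_mk, huv]
        simp
      simp [this]
    by_cases hz : ω u v = 0
    · simp [hz]
    refine Submodule.smul_mem _ _ (Submodule.subset_span ⟨_, hG u v huv hz ?_, rfl⟩)
    rw [Ne, Sym2.eq_iff]
    tauto
  have h2 : (ω x y + ω x y) • rigRow d p s(x, y) ∈ Submodule.span ℝ (rigRow d p '' G) := by
    rw [eq_neg_of_add_eq_zero_left hsum]
    exact Submodule.neg_mem _ hrest
  refine (Submodule.smul_mem_iff _ ?_).1 h2
  intro h
  apply h0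
  linarith

lemma rrk_le_of_mem_span (p : V → Fin d → ℝ) (F G : Set (Sym2 V))
    (h : ∀ e ∈ F, rigRow d p e ∈ Submodule.span ℝ (rigRow d p '' G)) :
    rrk d p F ≤ rrk d p G := by
  apply Submodule.finrank_mono
  rw [Submodule.span_le]
  rintro _ ⟨e, he, rfl⟩
  exact h e he

lemma le_krank {p : V → Fin d → ℝ} (hp : GP p) (W : Finset V) :
    rrk d p (cliqueOn W : Set (Sym2 V)) ≤ krank d W.card := by
  induction W using Finset.induction_on with
  | empty =>
    have h0 : cliqueOn (∅ : Finset V) = ∅ := rfl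
    simp [krank, rrk, h0]
  | insert v W hv ih =>
    obtain ⟨D, hDW, hD⟩ := Finset.exists_subset_card_eq (min_le_left W.card d)
    have hvD : v ∉ D := fun h => hv (hDW h)
    rw [Finset.card_insert_of_notMem hv, krank, Finset.sum_range_succ, ← krank]
    have h1 := rrk_union_le p (cliqueOn W : Set (Sym2 V)) (D.image fun u => s(v, u))
    have h2 : (D.image fun u => s(v, u)).card ≤ D.card := Finset.card_image_le
    suffices h3 : rrk d p (cliqueOn (insert v W) : Set (Sym2 V)) ≤
        rrk d p (↑(cliqueOn W) ∪ ↑(D.image fun u => s(v, u))) by omega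
    apply rrk_le_of_mem_span
    -- edges from `v` to the rest of `W`
    have key : ∀ y ∈ W, rigRow d p s(v, y) ∈ Submodule.span ℝ
        (rigRow d p '' (↑(cliqueOn W) ∪ ↑(D.image fun u => s(v, u)))) := by
      intro y hy
      by_cases hyD : y ∈ D
      · exact Submodule.subset_span ⟨_, Or.inr (Finset.mem_coe.2 (Finset.mem_image_of_mem _ hyD)), rfl⟩
      have hcard : D.card = d := by
        have : D ≠ W := fun h => hyD (h ▸ hy)
        rcases le_total W.card d with h | h
        · rw [min_eq_left h] at hD
          exact absurd (Finset.eq_of_subset_of_card_le hDW hD.ge) this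
        · rw [hD, min_eq_right h]
      have hvy : v ≠ y := fun h => hv (h ▸ hy)
      have hli := hp v D hvD hcard.le
      have hspan : Submodule.span ℝ (Set.range fun u : (D : Set V) => p v - p u) = ⊤ := by
        rcases isEmpty_or_nonempty (D : Set V) with hE | hE
        · have hd0 : d = 0 := by
            rw [← hcard, Finset.card_eq_zero]
            ext z
            simp only [Finset.notMem_empty, iff_false]
            exact fun hz => hE.elim ⟨z, hz⟩
          subst hd0
          exact Subsingleton.elim _ _
        · apply hli.span_eq_top_of_card_eq_finrank
          simp [hcard]
      have hmem : p v - p y ∈ Submodule.span ℝ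
          (Set.range fun u : (D : Set V) => p v - p u) := by
        rw [hspan]; trivial
      obtain ⟨c, hc⟩ := (Submodule.mem_span_range_iff_exists_fun ℝ).1 hmem
      -- extend the coefficients by zero
      let c' : V → ℝ := fun u => if h : u ∈ D then c ⟨u, h⟩ else 0
      have hc'0 : ∀ u, u ∉ D → c' u = 0 := fun u hu => by simp [c', hu]
      have hc' : ∀ i, ∑ u ∈ D, c' u * (p v i - p u i) = p v i - p y i := by
        intro i
        have := congrFun hc i
        rw [Finset.sum_apply] at this
        rw [← Pi.sub_apply, ← this, ← Finset.sum_coe_sort]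
        refine Finset.sum_congr rfl fun u _ => ?_
        have hu : u.1 ∈ D := u.2
        simp [c']
      have hav : (1 : ℝ) - ∑ u ∈ D, c' u ≠ 0 := by
        intro hz
        have hliy := hp y D hyD hcard.le
        rw [linearIndepOn_finset_iff] at hliy
        have hzero : ∀ u ∈ D, c' u = 0 := by
          apply hliy c'
          funext i
          have h4 := hc' i
          simp only [mul_sub, Finset.sum_sub_distrib, ← Finset.sum_mul] at h4
          simp only [Finset.sum_apply, Pi.smul_apply, Pi.sub_apply, smul_eq_mul, mul_sub,
            Finset.sum_sub_distrib, ← Finset.sum_mul, Pi.zero_apply]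
          have h5 : ∑ u ∈ D, c' u = 1 := by linarith
          rw [h5] at h4 ⊢
          linarith
        rw [Finset.sum_eq_zero hzero] at hz
        norm_num at hz
      let a : V → ℝ := fun u => c' u + (if u = v then 1 - ∑ u ∈ D, c' u else 0) -
        (if u = y then 1 else 0)
      have hsumc : ∀ f : V → ℝ, ∑ u, c' u * f u = ∑ u ∈ D, c' u * f u := by
        intro f
        symm
        apply Finset.sum_subset (Finset.subset_univ _)
        intro u _ hu
        rw [hc'0 u hu, zero_mul]
      have hsuma : ∀ f : V → ℝ, ∑ u, a u * f u =
          ∑ u ∈ D, c' u * f u + (1 - ∑ u ∈ D, c' u) * f v - f y := by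
        intro f
        simp only [a, sub_mul, add_mul, Finset.sum_sub_distrib, Finset.sum_add_distrib, hsumc,
          ite_mul, zero_mul, Finset.sum_ite_eq', Finset.mem_univ, if_true, one_mul]
      have ha1 : ∑ u, a u = 0 := by
        have := hsuma fun _ => 1
        simp only [mul_one] at this
        rw [this]
        ring
      have hap : ∀ i, ∑ u, a u * p u i = 0 := by
        intro i
        rw [hsuma fun u => p u i]
        have h4 := hc' i
        simp only [mul_sub, Finset.sum_sub_distrib, ← Finset.sum_mul] at h4
        linarith
      have hav' : a v = 1 - ∑ u ∈ D, c' u := by simp [a, hc'0 v hvD, hvy]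
      have hay : a y = -1 := by simp [a, hc'0 y hyD, hvy.symm]
      have hsupp : ∀ u, a u ≠ 0 → u ∈ D ∨ u = v ∨ u = y := by
        intro u hu
        by_contra hcon
        push Not at hcon
        apply hu
        simp [a, hc'0 u hcon.1, hcon.2.1, hcon.2.2]
      refine stress_mem p (fun u w => a u * a w) (fun u w => mul_comm _ _) ?_ v y hvy ?_ _ ?_
      · intro w i
        have : ∀ u, a w * a u * (p w i - p u i) = a w * p w i * a u - a w * (a u * p u i) := by
          intro u; ring
        simp only [this, Finset.sum_sub_distrib, ← Finset.mul_sum, ha1, hap]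
        ring
      · simp only [hav', hay]
        exact mul_ne_zero hav (by norm_num)
      · intro u w huw h0 hne
        have hu := hsupp u (left_ne_zero_of_mul h0)
        have hw := hsupp w (right_ne_zero_of_mul h0)
        have hin : ∀ z, z ∈ D ∨ z = y → z ∈ W := by
          rintro z (hz | rfl)
          · exact hDW hz
          · exact hy
        by_cases huv : u = v
        · subst huv
          right
          have hwD : w ∈ D := by
            rcases hw with h | h | h
            · exact h
            · exact absurd h.symm huw
            · exact absurd (by rw [h]) hne
          exact Finset.mem_coe.2 (Finset.mem_image_of_mem _ hwD)
        by_cases hwv : w = v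
        · subst hwv
          right
          have huD : u ∈ D := by
            rcases hu with h | h | h
            · exact h
            · exact absurd h huw
            · exact absurd (by rw [h, Sym2.eq_swap]) hne
          rw [Sym2.eq_swap]
          exact Finset.mem_coe.2 (Finset.mem_image_of_mem _ huD)
        left
        have hu' : u ∈ W := hin u (by tauto)
        have hw' : w ∈ W := hin w (by tauto)
        rw [Finset.mem_coe, mem_cliqueOn]
        refine ⟨by simpa using huw, ?_⟩
        intro x hx
        rcases Sym2.mem_iff.1 hx with rfl | rfl <;> assumption
    intro e he
    have he' := mem_cliqueOn.1 (Finset.mem_coe.1 he)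
    by_cases hve : v ∈ e
    · obtain ⟨y, rfl⟩ := hve
      apply key
      have h4 := he'.2 y (by simp)
      rcases Finset.mem_insert.1 h4 with h | h
      · exact absurd (by simp [h]) he'.1
      · exact h
    · refine Submodule.subset_span ⟨_, Or.inl ?_, rfl⟩
      rw [Finset.mem_coe, mem_cliqueOn]
      refine ⟨he'.1, fun x hx => ?_⟩
      rcases Finset.mem_insert.1 (he'.2 x hx) with h | h
      · exact absurd (h ▸ hx) hve
      · exact h

lemma rrk_generic_ge {p : V → Fin d → ℝ} (hp : Generic d p) (p0 : V → Fin d → ℝ)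
    (F : Set (Sym2 V)) : rrk d p0 F ≤ rrk d p F := by
  obtain ⟨F', hF', -, hspan, hli⟩ := exists_linearIndepOn_extension
    (linearIndepOn_empty ℝ (rigRow d p0)) (Set.empty_subset F)
  let X : V → Fin d → MvPolynomial (V × Fin d) ℚ := fun v i => MvPolynomial.X (v, i)
  let M : ↥F' → (V × Fin d) → MvPolynomial (V × Fin d) ℚ := fun e =>
    Sym2.lift ⟨fun u v wi => (((if wi.1 = u then 1 else 0) - (if wi.1 = v then 1 else 0)) *
      (X u wi.2 - X v wi.2)), fun u v => by funext wi; ring⟩ e.1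
  have key : ∀ q : V → Fin d → ℝ, (fun e : F' => rigRow d q e.1) =
      fun e wi => MvPolynomial.aeval (fun vi : V × Fin d => q vi.1 vi.2) (M e wi) := by
    intro q
    funext ⟨e, he⟩ wi
    induction e using Sym2.ind with
    | _ u v =>
      rw [rigRow_mk]
      simp only [M, X, Sym2.lift_mk, map_mul, map_sub, MvPolynomial.aeval_X]
      split_ifs <;> simp
  have h0 : LinearIndependent ℝ (fun (e : F') wi =>
      (MvPolynomial.aeval (fun vi : V × Fin d => p0 vi.1 vi.2) (M e wi) : ℝ)) := by
    rw [← key]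
    exact hli
  have h1 := (genP_li M _ h0).of_algInd _ hp
  beta_reduce at h1
  rw [← key] at h1
  have := Fintype.ofFinite F'
  have e1 := finrank_span_eq_card h1
  have e0 := finrank_span_eq_card (R := ℝ) hli
  have r1 : rrk d p F' = Fintype.card F' := by
    rw [rrk, Set.image_eq_range]
    exact e1
  have r0 : rrk d p0 F' = Fintype.card F' := by
    rw [rrk, Set.image_eq_range]
    exact e0
  calc rrk d p0 F ≤ rrk d p0 F' := rrk_le_of_mem_span _ _ _ fun e he => hspan ⟨e, he, rfl⟩
    _ = rrk d p F' := by rw [r0, r1]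
    _ ≤ rrk d p F := rrk_mono p hF'

end Rig


/-! ### From symmetric products to rigidity -/

section Bridge

variable {V : Type*} [Fintype V] [DecidableEq V] {d : ℕ}

lemma exists_dep {m : ℕ} (b : V → Fin m → ℝ) (hcard : m < Fintype.card V)
    (hb : ∀ M0 : Finset V, M0.card = m → LinearIndepOn ℝ b (M0 : Set V)) :
    ∃ c : V → ℝ, (∀ v, c v ≠ 0) ∧ ∑ v, c v • b v = 0 := by
  let T : (V → ℝ) →ₗ[ℝ] (Fin m → ℝ) := Fintype.linearCombination ℝ b
  have hT : ∀ x, T x = ∑ v, x v • b v := fun x => Fintype.linearCombination_apply ℝ b x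
  have key : ∀ v, ∃ x ∈ LinearMap.ker T, x v ≠ 0 := by
    intro v
    obtain ⟨M0, hM0, hM0c⟩ := Finset.exists_subset_card_eq
      (show m ≤ (Finset.univ.erase v).card by
        rw [Finset.card_erase_of_mem (Finset.mem_univ v), Finset.card_univ]; omega)
    have hv : v ∉ M0 := fun h => by simpa using hM0 h
    have hnot : ¬ LinearIndepOn ℝ b ((insert v M0 : Finset V) : Set V) := by
      intro h
      have := LinearIndependent.fintype_card_le_finrank h
      simp [Finset.card_insert_of_notMem hv, hM0c] at this
    rw [linearIndepOn_finset_iff] at hnot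
    push Not at hnot
    obtain ⟨f, hf, i, hi, hfi⟩ := hnot
    refine ⟨fun u => if u ∈ insert v M0 then f u else 0, ?_, ?_⟩
    · rw [LinearMap.mem_ker, hT, ← hf]
      simp only [ite_smul, zero_smul]
      rw [Finset.sum_ite_mem, Finset.univ_inter]
    · simp only [Finset.mem_insert_self, if_true]
      intro h0
      rw [Finset.sum_insert hv, h0, zero_smul, zero_add] at hf
      have h1 := linearIndepOn_finset_iff.1 (hb M0 hM0c) f hf
      rcases Finset.mem_insert.1 hi with rfl | hi
      · exact hfi h0
      · exact hfi (h1 i hi)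
  obtain ⟨c, hc, hcv⟩ := Module.Dual.exists_forall_mem_ne_zero_of_forall_exists
    (p := LinearMap.ker T) (f := fun v : V => (LinearMap.proj v : (V → ℝ) →ₗ[ℝ] ℝ)) key
  refine ⟨c, hcv, ?_⟩
  rw [← hT]
  exact hc

lemma exists_config {m : ℕ} (b : V → Fin m → ℝ) (hcard : Fintype.card V = d + 1 + m)
    (hb : ∀ M0 : Finset V, M0.card = m → LinearIndepOn ℝ b (M0 : Set V)) :
    ∃ (c : V → ℝ) (p0 : V → Fin d → ℝ), (∀ v, c v ≠ 0) ∧ (∀ j, ∑ v, c v * b v j = 0) ∧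
      (∀ i j, ∑ v, p0 v i * (c v * b v j) = 0) ∧ GP p0 := by
  obtain ⟨c, hc, hcb⟩ := exists_dep b (by omega) hb
  obtain ⟨v0⟩ : Nonempty V := Fintype.card_pos_iff.1 (by omega)
  let T : (V → ℝ) →ₗ[ℝ] (Fin m → ℝ) := Fintype.linearCombination ℝ fun v => c v • b v
  have hT : ∀ x, T x = ∑ v, x v • c v • b v := fun x => Fintype.linearCombination_apply ℝ _ x
  let S : (V → ℝ) →ₗ[ℝ] (Fin m → ℝ) × ℝ := T.prod (LinearMap.proj v0)
  have hdim : d ≤ Module.finrank ℝ (LinearMap.ker S) := by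
    have h1 := LinearMap.finrank_range_add_finrank_ker S
    have h2 := Submodule.finrank_le (LinearMap.range S)
    simp at h1 h2
    omega
  let B := Module.finBasis ℝ (LinearMap.ker S)
  let y : Fin d → LinearMap.ker S := fun i => B (Fin.castLE hdim i)
  have hy : LinearIndependent ℝ y :=
    B.linearIndependent.comp _ (Fin.castLE_injective hdim)
  have hyT : ∀ i, T (y i).1 = 0 := fun i => (Prod.ext_iff.1 (y i).2).1
  have hy0 : ∀ i, (y i).1 v0 = 0 := fun i => (Prod.ext_iff.1 (y i).2).2
  let p0 : V → Fin d → ℝ := fun v i => (y i).1 v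
  refine ⟨c, p0, hc, ?_, ?_, ?_⟩
  · intro j
    simpa using congrFun hcb j
  · intro i j
    have := hyT i
    rw [hT] at this
    simpa using congrFun this j
  · intro v N hv hN
    obtain ⟨N', hNN', hN'v, hN'⟩ := Finset.exists_subsuperset_card_eq
      (show N ⊆ Finset.univ.erase v from fun u hu =>
        Finset.mem_erase.2 ⟨fun h => hv (h ▸ hu), Finset.mem_univ _⟩) hN
      (by rw [Finset.card_erase_of_mem (Finset.mem_univ v), Finset.card_univ]; omega)
    have hvN' : v ∉ N' := fun h => by simpa using hN'v h
    refine LinearIndepOn.mono ?_ (Finset.coe_subset.2 hNN')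
    refine linearIndependent_of_top_le_span_of_card_eq_finrank ?_ (by simp [hN'])
    by_contra hlt
    obtain ⟨f, hf0, hf⟩ := Submodule.exists_le_ker_of_lt_top _
      (lt_top_iff_ne_top.2 fun h => hlt h.ge)
    apply hf0
    have hfN : ∀ u ∈ N', f (p0 u) = f (p0 v) := by
      intro u hu
      have h1 := hf (Submodule.subset_span ⟨⟨u, hu⟩, rfl⟩)
      rw [LinearMap.mem_ker, map_sub] at h1
      exact (sub_eq_zero.1 h1).symm
    let z : V → ℝ := fun u => f (p0 u) - f (p0 v)
    have hfe : ∀ w, f w = ∑ i, w i * f (Pi.single i 1) := by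
      intro w
      have := LinearMap.pi_apply_eq_sum_univ f w
      simp only [smul_eq_mul] at this
      rw [this]
      refine Finset.sum_congr rfl fun i _ => ?_
      congr 2
      funext j
      simp [Pi.single_apply, eq_comm]
    have hz : z = ∑ i, f (Pi.single i 1) • (y i).1 - f (p0 v) • (fun _ => (1 : ℝ)) := by
      funext u
      simp only [z, hfe (p0 u), Pi.sub_apply, Finset.sum_apply, Pi.smul_apply, smul_eq_mul,
        mul_one, p0]
      congr 1
      exact Finset.sum_congr rfl fun i _ => mul_comm _ _
    have hTz : T z = 0 := by
      rw [hz, map_sub, map_sum, map_smul, hT (fun _ => 1)]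
      simp [hyT, hcb]
    have hM : (insert v N')ᶜ.card = m := by
      rw [Finset.card_compl, Finset.card_insert_of_notMem hvN', hN', hcard]
      omega
    have hz0 : ∀ u, z u = 0 := by
      have hin : ∀ u ∈ insert v N', z u = 0 := by
        intro u hu
        rcases Finset.mem_insert.1 hu with rfl | hu
        · simp [z]
        · simp [z, hfN u hu]
      have h1 := linearIndepOn_finset_iff.1 (hb _ hM) (fun u => z u * c u) (by
        rw [hT, ← Finset.sum_add_sum_compl (insert v N'),
          Finset.sum_eq_zero (fun u hu => by rw [hin u hu, zero_smul]), zero_add] at hTz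
        simpa [mul_smul] using hTz)
      intro u
      by_cases hu : u ∈ insert v N'
      · exact hin u hu
      · exact (mul_eq_zero.1 (h1 u (Finset.mem_compl.2 hu))).resolve_right (hc u)
    have hp00 : p0 v0 = 0 := funext hy0
    have hfv : f (p0 v) = 0 := by
      have := hz0 v0
      simp only [z, hp00, map_zero] at this
      linarith
    have hlam : ∀ i, f (Pi.single i 1) = 0 := by
      apply Fintype.linearIndependent_iff.1 hy
      apply Subtype.ext
      rw [hfv, zero_smul, sub_zero] at hz
      rw [Submodule.coe_sum, Submodule.coe_zero]
      simp only [Submodule.coe_smul]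
      rw [← hz]
      exact funext hz0
    ext i
    simpa using hlam i

lemma bridge {m : ℕ} {H : Finset (Sym2 V)} (hcard : Fintype.card V = d + 1 + m)
    (hs : ∀ e ∈ H, ¬ e.IsDiag) (hH : IndS m H) {p : V → Fin d → ℝ} (hp : Generic d p) :
    krank d (Fintype.card V) ≤
      rrk d p ((cliqueOn Finset.univ \ H : Finset (Sym2 V)) : Set (Sym2 V)) := by
  obtain ⟨x, hxH, hxM⟩ := (hH.gen.and (GenP.all (Finset.powersetCard m Finset.univ)
    fun N hN => genP_points N (Finset.mem_powersetCard.1 hN).2.le)).exists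
  set b : V → Fin m → ℝ := fun v i => x (v, i) with hbdef
  obtain ⟨c, p0, hc, hcb, hpb, hgp⟩ := exists_config (d := d) b hcard fun M0 hM0 =>
    hxM M0 (Finset.mem_powersetCard.2 ⟨Finset.subset_univ _, hM0⟩)
  refine le_trans ?_ (rrk_generic_ge hp p0 _)
  refine le_trans (krank_le hgp Finset.univ) ?_
  apply rrk_le_of_mem_span
  intro e he
  by_cases heH : e ∈ H
  swap
  · exact Submodule.subset_span ⟨e, Finset.mem_coe.2 (Finset.mem_sdiff.2 ⟨he, heH⟩), rfl⟩
  have hnot := (linearIndepOn_iff_notMem_span.1 hxH) e heH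
  obtain ⟨φ, hφ0, hφ⟩ := Submodule.exists_le_ker_of_notMem hnot
  have hφH : ∀ e' ∈ H, e' ≠ e → φ (sp b e') = 0 := fun e' he' hne =>
    hφ (Submodule.subset_span ⟨e', ⟨he', hne⟩, rfl⟩)
  clear hφ hnot he
  have hnd := hs e heH
  induction e using Sym2.ind with
  | _ u v =>
  have huv : u ≠ v := by simpa using hnd
  refine stress_mem p0 (fun u v => c u * c v * φ (sp b s(u, v)))
    (fun u v => by rw [Sym2.eq_swap]; ring) ?_ u v huv
    (mul_ne_zero (mul_ne_zero (hc _) (hc _)) hφ0) _ ?_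
  · intro w i
    have h1 : ∑ a, (c a * (p0 w i - p0 a i)) • sp b s(w, a) = 0 := by
      have hz : ∀ j, ∑ a, (c a * (p0 w i - p0 a i)) * b a j = 0 := by
        intro j
        have : ∀ a, (c a * (p0 w i - p0 a i)) * b a j =
          p0 w i * (c a * b a j) - p0 a i * (c a * b a j) := fun a => by ring
        simp only [this, Finset.sum_sub_distrib, ← Finset.mul_sum, hcb, hpb]
        ring
      funext ij
      rw [Finset.sum_apply]
      have : ∀ a, ((c a * (p0 w i - p0 a i)) • sp b s(w, a)) ij =
          b w ij.1 * ((c a * (p0 w i - p0 a i)) * b a ij.2) +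
          b w ij.2 * ((c a * (p0 w i - p0 a i)) * b a ij.1) := by
        intro a
        rw [Pi.smul_apply, sp_mk, smul_eq_mul]
        ring
      simp only [this, Finset.sum_add_distrib, ← Finset.mul_sum, hz]
      simp
    have h2 := congrArg (fun t => c w * φ t) h1
    simp only [map_sum, map_smul, map_zero, mul_zero, Finset.mul_sum, smul_eq_mul] at h2
    rw [← h2]
    exact Finset.sum_congr rfl fun a _ => by ring
  · intro a a' haa h0 hne
    rw [Finset.mem_coe, Finset.mem_sdiff, mem_cliqueOn]
    refine ⟨⟨by simpa using haa, fun _ _ => Finset.mem_univ _⟩, fun hin => ?_⟩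
    exact h0 (by simp only [hφH _ hin hne, mul_zero])

end Bridge

/-! ### Assembling the proof -/

section Final

variable {V : Type*} [Fintype V] [DecidableEq V] {d : ℕ}

lemma min_deg {p : V → Fin d → ℝ} (hp : GP p) {E : Finset (Sym2 V)}
    (hsimple : ∀ e ∈ E, ¬ e.IsDiag)
    (hE : ∀ f ∈ E, rrk d p (↑E \ {f}) = rrk d p ↑E)
    (v : V) (hv : ∃ e ∈ E, v ∈ e) : d + 1 ≤ degIn E v := by
  by_contra hlt
  obtain ⟨e, he, w, rfl⟩ := hv
  have hvN : v ∉ nb E v := fun h => hsimple _ (mem_nb.1 h) (by simp)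
  have hwN : w ∈ nb E v := mem_nb.2 he
  have h1 := star_rank p v (delV E v) (fun e he => (Finset.mem_filter.1 he).2) (nb E v) hvN
    (hp v _ hvN (by rw [card_nb]; omega))
  have h2 : rrk d p ((delV E v ∪ (nb E v).image fun u => s(v, u) : Finset (Sym2 V)) :
      Set (Sym2 V)) ≤ rrk d p (E : Set (Sym2 V)) := by
    apply rrk_mono
    rw [Finset.coe_subset]
    intro e he
    rcases Finset.mem_union.1 he with he | he
    · exact delV_subset _ _ he
    · obtain ⟨u, hu, rfl⟩ := Finset.mem_image.1 he
      exact mem_nb.1 hu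
  have h3 : rrk d p (↑E \ {s(v, w)}) ≤ rrk d p (↑(delV E v) ∪
      ↑(((nb E v).erase w).image fun u => s(v, u)) : Set (Sym2 V)) := by
    apply rrk_mono
    rintro e ⟨he1, he2⟩
    by_cases hve : v ∈ e
    · right
      obtain ⟨u, rfl⟩ := hve
      refine Finset.mem_coe.2 (Finset.mem_image_of_mem _ (Finset.mem_erase.2 ⟨?_, mem_nb.2 he1⟩))
      rintro rfl
      exact he2 rfl
    · left
      exact Finset.mem_coe.2 (Finset.mem_filter.2 ⟨he1, hve⟩)
  have h4 := rrk_union_le p (delV E v : Set (Sym2 V)) (((nb E v).erase w).image fun u => s(v, u))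
  have h5 : (((nb E v).erase w).image fun u => s(v, u)).card ≤ ((nb E v).erase w).card :=
    Finset.card_image_le
  rw [Finset.card_erase_of_mem hwN] at h5
  have h6 : 0 < (nb E v).card := Finset.card_pos.2 ⟨w, hwN⟩
  rw [hE _ he] at h3
  omega

lemma card_cliqueOn (W : Finset V) : (cliqueOn W).card = W.card.choose 2 := by
  rw [← Sym2.card_image_offDiag]
  congr 1
  ext e
  induction e using Sym2.ind with
  | _ u v =>
    rw [mem_cliqueOn]
    simp only [Finset.mem_image, Finset.mem_offDiag, Prod.exists, Sym2.mk_isDiag_iff,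
      Sym2.mem_iff, forall_eq_or_imp, forall_eq]
    constructor
    · rintro ⟨h, hu, hv⟩
      exact ⟨u, v, ⟨hu, hv, h⟩, rfl⟩
    · rintro ⟨a, b, ⟨ha, hb, hab⟩, h⟩
      rcases Sym2.eq_iff.1 h with ⟨rfl, rfl⟩ | ⟨rfl, rfl⟩
      · exact ⟨hab, ha, hb⟩
      · exact ⟨fun h => hab h.symm, hb, ha⟩

lemma choose_aux (d m : ℕ) :
    (d + 1 + m).choose 2 + (d + 1).choose 2 = d * (d + 1 + m) + (m + 1).choose 2 := by
  induction m with
  | zero =>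
    have : ∀ d : ℕ, (d + 1).choose 2 + (d + 1).choose 2 = d * (d + 1) := by
      intro d
      induction d with
      | zero => rfl
      | succ d ih =>
        rw [Nat.choose_succ_succ (d + 1), Nat.choose_one_right]
        nlinarith
    simpa using this d
  | succ m ih =>
    rw [← add_assoc, Nat.choose_succ_succ (d + 1 + m), Nat.choose_one_right,
      Nat.choose_succ_succ (m + 1), Nat.choose_one_right]
    simp only [Nat.succ_eq_add_one] at *
    nlinarith

lemma degIn_clique_sdiff {E : Finset (Sym2 V)} (hsimple : ∀ e ∈ E, ¬ e.IsDiag) (v : V) :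
    degIn (cliqueOn Finset.univ \ E) v + degIn E v + 1 = Fintype.card V := by
  rw [← card_nb, ← card_nb]
  have h1 : nb (cliqueOn Finset.univ \ E) v = (insert v (nb E v))ᶜ := by
    ext u
    rw [mem_nb, Finset.mem_sdiff, mem_cliqueOn, Finset.mem_compl, Finset.mem_insert, mem_nb]
    simp [eq_comm]
  have hvN : v ∉ nb E v := fun h => hsimple _ (mem_nb.1 h) (by simp)
  have h2 := Finset.card_compl_add_card (insert v (nb E v))
  rw [Finset.card_insert_of_notMem hvN] at h2
  rw [h1]
  omega

/-- The complete bipartite graph between `A` and `B`. -/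
def bip (A B : Finset V) : Finset (Sym2 V) := (A ×ˢ B).image fun t => s(t.1, t.2)

lemma mem_bip {A B : Finset V} {u v : V} :
    s(u, v) ∈ bip A B ↔ (u ∈ A ∧ v ∈ B) ∨ (u ∈ B ∧ v ∈ A) := by
  simp only [bip, Finset.mem_image, Finset.mem_product, Prod.exists, Sym2.eq_iff]
  constructor
  · rintro ⟨a, b, ⟨ha, hb⟩, ⟨rfl, rfl⟩ | ⟨rfl, rfl⟩⟩
    · exact Or.inl ⟨ha, hb⟩
    · exact Or.inr ⟨hb, ha⟩
  · rintro (⟨h1, h2⟩ | ⟨h1, h2⟩)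
    · exact ⟨u, v, ⟨h1, h2⟩, Or.inl ⟨rfl, rfl⟩⟩
    · exact ⟨v, u, ⟨h2, h1⟩, Or.inr ⟨rfl, rfl⟩⟩

lemma bip_subset {A B : Finset V} {H : Finset (Sym2 V)} (h : ∀ a ∈ A, ∀ b ∈ B, s(a, b) ∈ H) :
    bip A B ⊆ H := by
  intro e he
  obtain ⟨t, ht, rfl⟩ := Finset.mem_image.1 he
  rw [Finset.mem_product] at ht
  exact h _ ht.1 _ ht.2

lemma disj_of_bip {A B : Finset V} {H : Finset (Sym2 V)} (hs : ∀ e ∈ H, ¬ e.IsDiag)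
    (h : ∀ a ∈ A, ∀ b ∈ B, s(a, b) ∈ H) : Disjoint A B := by
  rw [Finset.disjoint_left]
  intro x hxA hxB
  exact hs _ (h x hxA x hxB) (by simp)

lemma card_bip {A B : Finset V} (h : Disjoint A B) : (bip A B).card = A.card * B.card := by
  rw [bip, Finset.card_image_of_injOn, Finset.card_product]
  rintro ⟨a, b⟩ h1 ⟨a', b'⟩ h2 heq
  simp only [Finset.coe_product, Set.mem_prod, Finset.mem_coe] at h1 h2
  rcases Sym2.eq_iff.1 heq with ⟨h3, h4⟩ | ⟨h3, h4⟩
  · simp only at h3 h4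
    rw [h3, h4]
  · simp only at h3 h4
    exact absurd (h3 ▸ h1.1 : b' ∈ A) fun h5 => Finset.disjoint_left.1 h h5 h2.2

end Final

/-- Lemma 4.14: a flexible `k`-fold `R_d`-circuit on at most `d+5` vertices is
the graph `B̄_{d,d-1}`, the union of two copies of `K_{d+2}` sharing `d-1` vertices
(and `k = 2`). -/
theorem small_flexible_kfold_circuit
    (d k : ℕ) (hd : 3 ≤ d) (hk : 2 ≤ k)
    {V : Type*} [Fintype V] [DecidableEq V]
    (E : Finset (Sym2 V)) (hsimple : ∀ e ∈ E, ¬ e.IsDiag)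
    (hcov : ∀ w : V, ∃ e ∈ E, w ∈ e)
    (hVcard : Fintype.card V ≤ d + 5)
    (p : V → Fin d → ℝ) (hp : Generic d p)
    (hE : IsKFoldCircuit d p E k)
    (hflex : ¬ IsRigidOn d p Finset.univ E) :
    k = 2 ∧
    ∃ W1 W2 : Finset V, W1.card = d + 2 ∧ W2.card = d + 2 ∧
      (W1 ∩ W2).card = d - 1 ∧ W1 ∪ W2 = Finset.univ ∧
      E = cliqueOn W1 ∪ cliqueOn W2 := by
  have hgp := hp.gp
  have hne : Nonempty V := by
    by_contra hemp
    rw [not_nonempty_iff] at hemp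
    have h0 : E = ∅ := by
      rw [Finset.eq_empty_iff_forall_notMem]
      intro e _
      induction e using Sym2.ind with
      | _ u v => exact hemp.elim u
    have := hE.2
    rw [h0, Finset.card_empty] at this
    omega
  set K : Finset (Sym2 V) := cliqueOn Finset.univ with hK
  have hmemK : ∀ e : Sym2 V, e ∈ K ↔ ¬ e.IsDiag := fun e => by
    rw [hK, mem_cliqueOn]
    simp
  have hEK : E ⊆ K := fun e he => (hmemK e).2 (hsimple e he)
  have hmin : ∀ v, d + 1 ≤ degIn E v := fun v => min_deg hgp hsimple hE.1 v (hcov v)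
  obtain ⟨m, hm⟩ : ∃ m, Fintype.card V = d + 1 + m := by
    obtain ⟨v⟩ := hne
    have h1 := degIn_clique_sdiff hsimple v
    have h2 := hmin v
    exact ⟨Fintype.card V - (d + 1), by omega⟩
  have hdegH : ∀ v, degIn (K \ E) v + 1 ≤ m := by
    intro v
    have h1 := degIn_clique_sdiff hsimple v
    have h2 := hmin v
    rw [← hK] at h1
    omega
  have hm1 : 1 ≤ m := by
    obtain ⟨v⟩ := hne
    have := hdegH v
    omega
  set full := krank d (Fintype.card V) with hfull
  have hfull_eq : full + (d + 1).choose 2 = d * Fintype.card V := by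
    rw [hfull, hm, add_assoc]
    exact krank_eq (1 + m)
  have hKcard : K.card = full + (m + 1).choose 2 := by
    have h1 := choose_aux d m
    rw [hK, card_cliqueOn, Finset.card_univ]
    rw [hm] at hfull_eq ⊢
    omega
  have hKrk : rrk d p (K : Set (Sym2 V)) = full :=
    le_antisymm (le_krank hgp Finset.univ) (krank_le hgp Finset.univ)
  have hElt : rrk d p (E : Set (Sym2 V)) < full := by
    refine lt_of_le_of_ne ?_ ?_
    · rw [← hKrk]
      exact rrk_mono p (Finset.coe_subset.2 hEK)
    · intro h
      apply hflex
      right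
      rw [h, Finset.card_univ]
      exact_mod_cast hfull_eq
  have hnull : ∀ F : Finset (Sym2 V), E ⊆ F → rrk d p (F : Set (Sym2 V)) + k ≤ F.card := by
    intro F hF
    have h1 := rrk_le_add_sdiff p (F := E) (F' := F)
    have h2 := Finset.card_sdiff_add_card_eq_card hF
    have h3 := hE.2
    omega
  have hind : ∀ J ⊆ K, IndS m J → full ≤ rrk d p ((K \ J : Finset (Sym2 V)) : Set (Sym2 V)) :=
    fun J hJ hJi => bridge hm (fun e he => (hmemK e).1 (hJ he)) hJi hp
  -- a maximal flexible graph containing `E`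
  obtain ⟨E', hE', hmax⟩ := Finset.exists_max_image
    (K.powerset.filter fun F => E ⊆ F ∧ rrk d p (F : Set (Sym2 V)) < full) Finset.card
    ⟨E, Finset.mem_filter.2 ⟨Finset.mem_powerset.2 hEK, Finset.Subset.refl _, hElt⟩⟩
  rw [Finset.mem_filter, Finset.mem_powerset] at hE'
  obtain ⟨hE'K, hEE', hE'lt⟩ := hE'
  have hE'ge : full ≤ rrk d p (E' : Set (Sym2 V)) + 1 := by
    have hneq : ∃ h ∈ K, h ∉ E' := by
      by_contra hcon
      push Not at hcon
      have : E' = K := Finset.Subset.antisymm hE'K hcon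
      rw [this, hKrk] at hE'lt
      exact lt_irrefl _ hE'lt
    obtain ⟨h, hhK, hhE'⟩ := hneq
    have h1 : full ≤ rrk d p ((insert h E' : Finset (Sym2 V)) : Set (Sym2 V)) := by
      by_contra hcon
      have h2 := hmax (insert h E') (Finset.mem_filter.2 ⟨Finset.mem_powerset.2
        (Finset.insert_subset hhK hE'K), hEE'.trans (Finset.subset_insert _ _), by omega⟩)
      rw [Finset.card_insert_of_notMem hhE'] at h2
      omega
    have h3 := rrk_le_add_sdiff p (F := E') (F' := insert h E')
    have h4 : (insert h E' \ E').card ≤ 1 := by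
      rw [Finset.insert_sdiff_of_notMem _ hhE', Finset.sdiff_self]
      simp
    omega
  have hHs : ∀ e ∈ K \ E, ¬ e.IsDiag := fun e he => (hmemK e).1 (Finset.mem_sdiff.1 he).1
  have hsub : K \ E' ⊆ K \ E := Finset.sdiff_subset_sdiff (Finset.Subset.refl _) hEE'
  have hH's : ∀ e ∈ K \ E', ¬ e.IsDiag := fun e he => hHs e (hsub he)
  have hH'card : (K \ E').card + 1 ≤ (m + 1).choose 2 := by
    have h1 := hnull E' hEE'
    have h2 := Finset.card_sdiff_add_card_eq_card hE'K
    omega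
  have hH'deg : ∀ v, degIn (K \ E') v + 1 ≤ m := fun v =>
    (Nat.succ_le_succ (degIn_mono hsub v)).trans (hdegH v)
  have hH'not : ¬ IndS m (K \ E') := by
    intro h
    have h1 := hind _ Finset.sdiff_subset h
    rw [Finset.sdiff_sdiff_eq_self hE'K] at h1
    omega
  have hm4 : m = 4 := by
    have hm5 : m ≤ 4 := by omega
    interval_cases m
    · exact absurd (indS_one (by have h1 : (1 + 1).choose 2 = 1 := rfl; omega)) hH'not
    · refine absurd (indS_two hH's ?_ fun v => by have := hH'deg v; omega) hH'not
      have : (2 + 1).choose 2 = 3 := rfl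
      omega
    · refine absurd (indS_three_two hH's ?_ fun v => by have := hH'deg v; omega) hH'not
      have : (3 + 1).choose 2 = 6 := rfl
      omega
    · rfl
  subst hm4
  have hch : (4 + 1).choose 2 = 10 := rfl
  rw [hch] at hKcard hH'card
  obtain ⟨A, B, hA, hB, hAB⟩ := (indS_four hH's (by omega)
    fun v => by have := hH'deg v; omega).resolve_left hH'not
  have hdisj := disj_of_bip hH's hAB
  have hABH : bip A B ⊆ K \ E := (bip_subset hAB).trans hsub
  have hABK : bip A B ⊆ K := hABH.trans Finset.sdiff_subset
  have hABc : (bip A B).card = 9 := by rw [card_bip hdisj, hA, hB]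
  have hEB : E ⊆ K \ bip A B := fun e he => Finset.mem_sdiff.2
    ⟨hEK he, fun h => (Finset.mem_sdiff.1 (hABH h)).2 he⟩
  have hBc : (K \ bip A B).card = full + 1 := by
    have := Finset.card_sdiff_add_card_eq_card hABK
    omega
  obtain ⟨e0, he0⟩ : (bip A B).Nonempty := Finset.card_pos.1 (by omega)
  have hec : ((bip A B).erase e0).card = 8 := by rw [Finset.card_erase_of_mem he0, hABc]
  have hdeg3 : ∀ J ⊆ K \ E, ∀ v, degIn J v ≤ 3 := fun J hJ v => by
    have h1 := degIn_mono hJ v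
    have h2 := hdegH v
    omega
  have hk2 : k = 2 := by
    have hi : IndS 4 ((bip A B).erase e0) := by
      have hsub8 : (bip A B).erase e0 ⊆ K \ E := (Finset.erase_subset _ _).trans hABH
      refine (indS_four (fun e he => hHs e (hsub8 he)) (by omega) (hdeg3 _ hsub8)).resolve_right ?_
      rintro ⟨A', B', hA', hB', h'⟩
      have h1 := disj_of_bip (fun e he => hHs e (hsub8 he)) h'
      have h2 := Finset.card_le_card (bip_subset h')
      rw [card_bip h1, hA', hB'] at h2
      omega
    have h1 := hind _ ((Finset.erase_subset _ _).trans hABK) hi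
    have h2 := rrk_le_add_sdiff p (F := K \ bip A B) (F' := K \ (bip A B).erase e0)
    have h3 : ((K \ (bip A B).erase e0) \ (K \ bip A B)).card ≤ 1 := by
      refine (Finset.card_le_card (t := {e0}) ?_).trans (by simp)
      intro e he
      simp only [Finset.mem_sdiff, Finset.mem_erase, not_and, not_not, Finset.mem_singleton]
        at he ⊢
      by_contra hne
      exact he.1.2 hne (he.2 he.1.1)
    have h4 := hnull _ hEB
    omega
  refine ⟨hk2, ?_⟩
  -- edges of the complement meeting `A ∪ B` lie in the bipartite graph
  have hnbA : ∀ a ∈ A, nb (K \ E) a = B := by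
    intro a ha
    refine (Finset.eq_of_subset_of_card_le (fun b hb => ?_) ?_).symm
    · exact mem_nb.2 (hABH (mem_bip.2 (Or.inl ⟨ha, hb⟩)))
    · rw [card_nb, hB]
      exact hdeg3 _ (Finset.Subset.refl _) a
  have hnbB : ∀ b ∈ B, nb (K \ E) b = A := by
    intro b hb
    refine (Finset.eq_of_subset_of_card_le (fun a ha => ?_) ?_).symm
    · exact mem_nb.2 (hABH (mem_bip.2 (Or.inr ⟨hb, ha⟩)))
    · rw [card_nb, hA]
      exact hdeg3 _ (Finset.Subset.refl _) b
  have hmeet : ∀ x y, s(x, y) ∈ K \ E → x ∈ A ∨ x ∈ B → s(x, y) ∈ bip A B := by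
    rintro x y hxy (hx | hx)
    · have := mem_nb.2 hxy
      rw [hnbA x hx] at this
      exact mem_bip.2 (Or.inl ⟨hx, this⟩)
    · have := mem_nb.2 hxy
      rw [hnbB x hx] at this
      exact mem_bip.2 (Or.inr ⟨hx, this⟩)
  have hEeq : E = K \ bip A B := by
    refine Finset.Subset.antisymm hEB ?_
    by_contra hcon
    rw [Finset.not_subset] at hcon
    obtain ⟨g, hgB, hgE⟩ := hcon
    rw [Finset.mem_sdiff] at hgB
    have hgH : g ∈ K \ E := Finset.mem_sdiff.2 ⟨hgB.1, hgE⟩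
    have hgn : g ∉ (bip A B).erase e0 := fun h => hgB.2 (Finset.mem_of_mem_erase h)
    have hsub9 : insert g ((bip A B).erase e0) ⊆ K \ E :=
      Finset.insert_subset hgH ((Finset.erase_subset _ _).trans hABH)
    have hc9 : (insert g ((bip A B).erase e0)).card = 9 := by
      rw [Finset.card_insert_of_notMem hgn, hec]
    have hi : IndS 4 (insert g ((bip A B).erase e0)) := by
      refine (indS_four (fun e he => hHs e (hsub9 he)) hc9.le (hdeg3 _ hsub9)).resolve_right ?_
      rintro ⟨A', B', hA', hB', h'⟩
      have h1 := disj_of_bip (fun e he => hHs e (hsub9 he)) h'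
      have h2 : bip A' B' = insert g ((bip A B).erase e0) := by
        apply Finset.eq_of_subset_of_card_le (bip_subset h')
        rw [card_bip h1, hA', hB', hc9]
      have h3 : g ∈ bip A' B' := by
        rw [h2]
        exact Finset.mem_insert_self _ _
      obtain ⟨⟨a, b⟩, hab, rfl⟩ := Finset.mem_image.1 h3
      rw [Finset.mem_product] at hab
      obtain ⟨b', hb', hbb'⟩ := Finset.exists_mem_ne (show 1 < B'.card by omega) b
      have h4 := h' a hab.1 b' hb'
      rcases Finset.mem_insert.1 h4 with h5 | h5
      · rcases Sym2.eq_iff.1 h5 with h6 | h6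
        · exact hbb' h6.2
        · exact Finset.disjoint_left.1 h1 hab.1 (h6.1 ▸ hab.2)
      · have h6 := mem_bip.1 (Finset.mem_of_mem_erase h5)
        exact hgB.2 (hmeet a b hgH (by tauto))
    have h1 := hind _ (hsub9.trans Finset.sdiff_subset) hi
    have h2 := rrk_le_add_sdiff p (F := (K \ bip A B).erase g)
      (F' := K \ insert g ((bip A B).erase e0))
    have h3 : ((K \ insert g ((bip A B).erase e0)) \ ((K \ bip A B).erase g)).card ≤ 1 := by
      refine (Finset.card_le_card (t := {e0}) ?_).trans (by simp)
      intro e he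
      simp only [Finset.mem_sdiff, Finset.mem_erase, Finset.mem_insert, Finset.mem_singleton]
        at he ⊢
      tauto
    have h4 := hnull ((K \ bip A B).erase g) fun e he =>
      Finset.mem_erase.2 ⟨fun h => hgE (h ▸ he), hEB he⟩
    rw [Finset.card_erase_of_mem (Finset.mem_sdiff.2 hgB), hBc] at h4
    omega
  refine ⟨Aᶜ, Bᶜ, ?_, ?_, ?_, ?_, ?_⟩
  · rw [Finset.card_compl, hA, hm]
    omega
  · rw [Finset.card_compl, hB, hm]
    omega
  · rw [← Finset.compl_union, Finset.card_compl, Finset.card_union_of_disjoint hdisj, hA, hB, hm]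
    omega
  · rw [← Finset.compl_inter, Finset.disjoint_iff_inter_eq_empty.1 hdisj, Finset.compl_empty]
  · rw [hEeq]
    ext e
    induction e using Sym2.ind with
    | _ u v =>
      have hu := fun h : u ∈ A => Finset.disjoint_left.1 hdisj h
      have hv := fun h : v ∈ A => Finset.disjoint_left.1 hdisj h
      rw [Finset.mem_sdiff, hmemK, mem_bip, Finset.mem_union, mem_cliqueOn, mem_cliqueOn]
      simp only [Sym2.mem_iff, forall_eq_or_imp, forall_eq, Finset.mem_compl]
      tauto
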